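/- arXiv:2412.01602 — 3 statements merged into one kernel-verified Lean document; each statement's English description precedes it below -/
import Mathlib

section
/- Let G = G_1 ⊕ G_2 be a 1-sum of graphs G_1 and G_2. Then h*(C_G; z) = h*(C_{G_1}; z) · h*(C_{G_2}; z). -/
open Polynomial Pointwise

/-- The set of vertices (generating points) of the cosmological polytope of the
multigraph with edge-endpoint map `ends : E → Sym2 V`. -/
def cosmoVertices {V E : Type*} [DecidableEq V] [DecidableEq E] (ends : E → Sym2 V) :
    Set ((V ⊕ E) → ℝ) :=
  { x | ∃ (f : E) (i j : V), ends f = s(i, j) ∧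
      (x = Pi.single (Sum.inl i) 1 + Pi.single (Sum.inl j) 1 - Pi.single (Sum.inr f) 1 ∨
       x = Pi.single (Sum.inl i) 1 - Pi.single (Sum.inl j) 1 + Pi.single (Sum.inr f) 1 ∨
       x = -Pi.single (Sum.inl i) 1 + Pi.single (Sum.inl j) 1 + Pi.single (Sum.inr f) 1) }

/-- The cosmological polytope of a multigraph. -/
def cosmoPolytope {V E : Type*} [DecidableEq V] [DecidableEq E] (ends : E → Sym2 V) :
    Set ((V ⊕ E) → ℝ) :=
  convexHull ℝ (cosmoVertices ends)

/-- Number of lattice points of the `t`-th dilate of `P`. -/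
noncomputable def latticePointCount {ι : Type*} (P : Set (ι → ℝ)) (t : ℕ) : ℕ :=
  Set.ncard { x : ι → ℤ | (fun k => (x k : ℝ)) ∈ (t : ℝ) • P }

/-- The Ehrhart series of `P` as a formal power series. -/
noncomputable def ehrhartSeries {ι : Type*} (P : Set (ι → ℝ)) : PowerSeries ℚ :=
  PowerSeries.mk fun t => if t = 0 then 1 else (latticePointCount P t : ℚ)

/-- `h` is the `h^*`-polynomial of the `d`-dimensional lattice polytope `P`:
`Ehr(P; z) = h(z) / (1-z)^(d+1)` as formal power series. -/
def IsHStarPoly {ι : Type*} (P : Set (ι → ℝ)) (d : ℕ) (h : Polynomial ℚ) : Prop :=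
  ehrhartSeries P * (1 - PowerSeries.X) ^ (d + 1) = (h : PowerSeries ℚ)

/-- Adjacency relation of the multigraph given by `ends`. -/
def multigraphAdj {V E : Type*} (ends : E → Sym2 V) (i j : V) : Prop :=
  ∃ f, ends f = s(i, j)

/-- Reachability in the multigraph given by `ends`. -/
def multigraphReach {V E : Type*} (ends : E → Sym2 V) : V → V → Prop :=
  Relation.ReflTransGen (multigraphAdj ends)

/-- The number of connected components of the multigraph given by `ends`. -/
noncomputable def numComponents {V E : Type*} (ends : E → Sym2 V) : ℕ :=
  Nat.card (Quot (multigraphReach ends))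


/-- The endpoint map of the `1`-sum `G₁ ⊕_{v,w} G₂`, realized on a vertex type `W` via
injections `φ₁ : V₁ → W`, `φ₂ : V₂ → W` identifying `v` with `w`; the edges are `E₁ ⊕ E₂`. -/
def oneSumEnds {V₁ E₁ V₂ E₂ W : Type*}
    (ends₁ : E₁ → Sym2 V₁) (ends₂ : E₂ → Sym2 V₂) (φ₁ : V₁ → W) (φ₂ : V₂ → W) :
    (E₁ ⊕ E₂) → Sym2 W :=
  Sum.elim (fun f => (ends₁ f).map φ₁) (fun f => (ends₂ f).map φ₂)

/-- The cone over `P`. -/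
def coneOver {I : Type*} (P : Set (I → ℝ)) : Set (I → ℝ) := {x | ∃ t : ℝ, 0 ≤ t ∧ x ∈ t • P}

/-- Casting integer vectors to real vectors. -/
def castVec {I : Type*} (z : I → ℤ) : I → ℝ := fun k => (z k : ℝ)

/-- Extension by zero along a map. -/
noncomputable def extZero {I J R : Type*} [Zero R] (ψ : I → J) (a : I → R) : J → R :=
  Function.extend ψ a 0

lemma extZero_apply {I J R : Type*} [Zero R] {ψ : I → J} (h : Function.Injective ψ) (a : I → R)
    (k : I) : extZero ψ a (ψ k) = a k := h.extend_apply _ _ _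

lemma extZero_apply' {I J R : Type*} [Zero R] {ψ : I → J} (a : I → R)
    (k : J) (hk : ¬ ∃ i, ψ i = k) : extZero ψ a k = 0 := by
  simp [extZero, Function.extend_apply' _ _ _ hk]

lemma castVec_extZero {I J : Type*} {ψ : I → J} (h : Function.Injective ψ) (a : I → ℤ) :
    castVec (extZero ψ a) = extZero ψ (castVec a) := by
  funext k
  by_cases hk : ∃ i, ψ i = k
  · obtain ⟨i, rfl⟩ := hk
    simp [castVec, extZero_apply h]
  · simp [castVec, extZero_apply' _ _ hk]

lemma castVec_add {I : Type*} (a b : I → ℤ) : castVec (a + b) = castVec a + castVec b := by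
  funext k; simp [castVec]

/-- Extension by zero as a linear map. -/
noncomputable def extLin {I J : Type*} (ψ : I → J) (h : Function.Injective ψ) :
    (I → ℝ) →ₗ[ℝ] (J → ℝ) where
  toFun := extZero ψ
  map_add' a b := by
    funext k
    by_cases hk : ∃ i, ψ i = k
    · obtain ⟨i, rfl⟩ := hk
      simp [extZero_apply h]
    · simp [extZero_apply' _ _ hk]
  map_smul' c b := by
    funext k
    by_cases hk : ∃ i, ψ i = k
    · obtain ⟨i, rfl⟩ := hk
      simp [extZero_apply h]
    · simp [extZero_apply' _ _ hk]

lemma extLin_apply {I J : Type*} (ψ : I → J) (h : Function.Injective ψ) (a : I → ℝ) :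
    extLin ψ h a = extZero ψ a := rfl

lemma extZero_single {I J : Type*} [DecidableEq I] [DecidableEq J] {ψ : I → J}
    (h : Function.Injective ψ) (i : I) (r : ℝ) :
    extZero ψ (Pi.single i r) = Pi.single (ψ i) r := by
  funext k
  by_cases hk : ∃ i, ψ i = k
  · obtain ⟨i', rfl⟩ := hk
    rw [extZero_apply h]
    by_cases hi : i' = i
    · subst hi; simp
    · rw [Pi.single_eq_of_ne hi, Pi.single_eq_of_ne (fun e => hi (h e))]
  · rw [extZero_apply' _ _ hk, Pi.single_eq_of_ne]
    rintro rfl; exact hk ⟨_, rfl⟩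

lemma coneOver_add {I : Type*} {P : Set (I → ℝ)} (hP : Convex ℝ P) {x y : I → ℝ}
    (hx : x ∈ coneOver P) (hy : y ∈ coneOver P) : x + y ∈ coneOver P := by
  obtain ⟨s, hs, hx⟩ := hx
  obtain ⟨t, ht, hy⟩ := hy
  exact ⟨s + t, add_nonneg hs ht, by rw [hP.add_smul hs ht]; exact Set.add_mem_add hx hy⟩

lemma coneOver_smul_of_mem {I : Type*} {P : Set (I → ℝ)} {x : I → ℝ} {t : ℝ} (ht : 0 ≤ t)
    (hx : x ∈ P) : t • x ∈ coneOver P := ⟨t, ht, Set.smul_mem_smul_set hx⟩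

lemma sum_of_mem_smul {I : Type*} [Fintype I] {P : Set (I → ℝ)} (hP : ∀ x ∈ P, ∑ k, x k = 1)
    {x : I → ℝ} {t : ℝ} (hx : x ∈ t • P) : ∑ k, x k = t := by
  obtain ⟨y, hy, rfl⟩ := hx
  simp [← Finset.mul_sum, hP y hy]

lemma mem_smul_iff {I : Type*} [Fintype I] {P : Set (I → ℝ)} (hP : ∀ x ∈ P, ∑ k, x k = 1)
    {z : I → ℤ} {t : ℕ} : castVec z ∈ (t : ℝ) • P ↔ castVec z ∈ coneOver P ∧ ∑ k, z k = t := by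
  constructor
  · intro h
    refine ⟨⟨t, by positivity, h⟩, ?_⟩
    have := sum_of_mem_smul hP h
    simp only [castVec] at this
    exact_mod_cast this
  · rintro ⟨⟨s, hs, h⟩, h2⟩
    have := sum_of_mem_smul hP h
    simp only [castVec] at this
    have h3 : s = t := by rw [← this]; exact_mod_cast h2
    rwa [← h3]

lemma sum_nonneg_of_cone {I : Type*} [Fintype I] {P : Set (I → ℝ)} (hP : ∀ x ∈ P, ∑ k, x k = 1)
    {z : I → ℤ} (h : castVec z ∈ coneOver P) : 0 ≤ ∑ k, z k := by
  obtain ⟨s, hs, h⟩ := h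
  have := sum_of_mem_smul hP h
  simp only [castVec] at this
  rw [← this] at hs
  exact_mod_cast hs

lemma lattice_finite {I : Type*} [Fintype I] {P : Set (I → ℝ)} {M : ℕ}
    (hM : ∀ x ∈ P, ∀ k, |x k| ≤ M) (t : ℕ) :
    {z : I → ℤ | castVec z ∈ (t : ℝ) • P}.Finite := by
  classical
  refine (Set.finite_Icc (fun _ : I => -((t * M : ℕ) : ℤ)) (fun _ => ((t * M : ℕ) : ℤ))).subset ?_
  rintro z ⟨y, hy, h⟩
  have key : ∀ k, |z k| ≤ ((t * M : ℕ) : ℤ) := by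
    intro k
    have h1 : (t : ℝ) * y k = z k := congrFun h k
    have h2 : |(z k : ℝ)| ≤ t * M := by
      rw [← h1, abs_mul, Nat.abs_cast]
      exact mul_le_mul_of_nonneg_left (hM y hy k) (by positivity)
    exact_mod_cast h2
  exact ⟨fun k => (abs_le.mp (key k)).1, fun k => (abs_le.mp (key k)).2⟩

lemma prim_exists {I : Type*} [Fintype I] [DecidableEq I] {P : Set (I → ℝ)}
    (hP : ∀ x ∈ P, ∑ k, x k = 1) (k : I) {z : I → ℤ} (hz : castVec z ∈ coneOver P) :
    ∃ n : ℕ, castVec (z - Pi.single k (n : ℤ)) ∈ coneOver P ∧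
      castVec (z - Pi.single k (n : ℤ) - Pi.single k 1) ∉ coneOver P := by
  classical
  have hex : ∃ n : ℕ, castVec (z - Pi.single k (n : ℤ)) ∉ coneOver P := by
    refine ⟨(∑ i, z i).toNat + 1, fun h => ?_⟩
    have := sum_nonneg_of_cone hP h
    simp [Finset.sum_sub_distrib] at this
  have h1 := Nat.find_spec hex
  have h0 : Nat.find hex ≠ 0 := by
    intro h0
    rw [h0] at h1
    simp [hz] at h1
  obtain ⟨m, hm⟩ := Nat.exists_eq_succ_of_ne_zero h0
  refine ⟨m, ?_, ?_⟩
  · by_contra hc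
    have := Nat.find_min' hex hc
    omega
  · rw [hm] at h1
    have e : z - Pi.single k (m : ℤ) - Pi.single k 1 = z - Pi.single k ((m.succ : ℕ) : ℤ) := by
      rw [sub_sub, ← Pi.single_add]; simp
    rwa [e]

lemma castVec_add_single_mem {I : Type*} [DecidableEq I] {P : Set (I → ℝ)} (hc : Convex ℝ P)
    {k : I} (hk : Pi.single k (1 : ℝ) ∈ P) {x : I → ℝ} (hx : x ∈ coneOver P) {r : ℝ} (hr : 0 ≤ r) :
    x + Pi.single k r ∈ coneOver P := by
  have := coneOver_smul_of_mem hr hk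
  have e : r • (Pi.single k (1 : ℝ) : I → ℝ) = Pi.single k r := by
    rw [← Pi.single_smul]; simp
  rw [e] at this
  exact coneOver_add hc hx this

lemma castVec_single {I : Type*} [DecidableEq I] (k : I) (n : ℤ) :
    castVec (Pi.single k n) = Pi.single k (n : ℝ) := by
  funext i
  by_cases h : i = k
  · subst h; simp [castVec]
  · simp [castVec, h]

lemma cone_glue {I₁ I₂ J : Type*} {X₁ : Set (I₁ → ℝ)} {X₂ : Set (I₂ → ℝ)}
    {ψ₁ : I₁ → J} {ψ₂ : I₂ → J} (hψ₁ : Function.Injective ψ₁) (hψ₂ : Function.Injective ψ₂)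
    (hn₁ : X₁.Nonempty) (hn₂ : X₂.Nonempty) (x : J → ℝ) :
    x ∈ coneOver (convexHull ℝ (extZero ψ₁ '' X₁ ∪ extZero ψ₂ '' X₂)) ↔
      ∃ a ∈ coneOver (convexHull ℝ X₁), ∃ b ∈ coneOver (convexHull ℝ X₂),
        x = extZero ψ₁ a + extZero ψ₂ b := by
  have e₁ : convexHull ℝ (extZero ψ₁ '' X₁) = extZero ψ₁ '' (convexHull ℝ X₁) :=
    ((extLin ψ₁ hψ₁).image_convexHull X₁).symm
  have e₂ : convexHull ℝ (extZero ψ₂ '' X₂) = extZero ψ₂ '' (convexHull ℝ X₂) :=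
    ((extLin ψ₂ hψ₂).image_convexHull X₂).symm
  have s₁ : ∀ (c : ℝ) a, extZero ψ₁ (c • a) = c • extZero ψ₁ a := (extLin ψ₁ hψ₁).map_smul
  have s₂ : ∀ (c : ℝ) a, extZero ψ₂ (c • a) = c • extZero ψ₂ a := (extLin ψ₂ hψ₂).map_smul
  constructor
  · rintro ⟨t, ht, y, hy, rfl⟩
    rw [convexHull_union (hn₁.image _) (hn₂.image _), e₁, e₂, mem_convexJoin] at hy
    obtain ⟨_, ⟨a, ha, rfl⟩, _, ⟨b, hb, rfl⟩, α, β, hα, hβ, -, rfl⟩ := hy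
    refine ⟨(t * α) • a, coneOver_smul_of_mem (by positivity) ha, (t * β) • b,
      coneOver_smul_of_mem (by positivity) hb, ?_⟩
    simp [s₁, s₂, mul_smul]
  · rintro ⟨_, ⟨s, hs, a, ha, rfl⟩, _, ⟨t, ht, b, hb, rfl⟩, rfl⟩
    refine coneOver_add (convex_convexHull _ _) ?_ ?_
    · simp only [s₁]
      apply coneOver_smul_of_mem hs
      apply convexHull_mono Set.subset_union_left
      rw [e₁]; exact ⟨a, ha, rfl⟩
    · simp only [s₂]
      apply coneOver_smul_of_mem ht
      apply convexHull_mono Set.subset_union_right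
      rw [e₂]; exact ⟨b, hb, rfl⟩

lemma sum_extZero {I J R : Type*} [Fintype I] [Fintype J] [AddCommMonoid R] {ψ : I → J}
    (h : Function.Injective ψ) (a : I → R) : ∑ k, extZero ψ a k = ∑ i, a i := by
  symm
  apply Finset.sum_of_injOn ψ h.injOn (by simp)
  · intro k _ hk
    apply extZero_apply'
    simpa using hk
  · intro i _
    rw [extZero_apply h]

lemma ehrhart_coeff {I : Type*} [Fintype I] {P : Set (I → ℝ)} (hn : P.Nonempty) (t : ℕ) :
    PowerSeries.coeff t (ehrhartSeries P) =
      (({z : I → ℤ | castVec z ∈ (t : ℝ) • P}.ncard : ℕ) : ℚ) := by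
  rw [ehrhartSeries, PowerSeries.coeff_mk]
  split_ifs with h
  · subst h
    have : {z : I → ℤ | castVec z ∈ ((0 : ℕ) : ℝ) • P} = {0} := by
      ext z
      simp only [Nat.cast_zero, Set.zero_smul_set hn, Set.mem_ofPred_eq, Set.mem_zero,
        Set.mem_singleton_iff]
      constructor
      · intro h; funext k
        have := congrFun h k
        simpa [castVec] using this
      · rintro rfl; funext k; simp [castVec]
    rw [this]; simp
  · rfl

theorem ehrhart_glue {I₁ I₂ J : Type*} [Fintype I₁] [Fintype I₂] [Fintype J]
    [DecidableEq I₁] [DecidableEq I₂] [DecidableEq J]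
    (X₁ : Set (I₁ → ℝ)) (X₂ : Set (I₂ → ℝ)) (P : Set (J → ℝ))
    (ψ₁ : I₁ → J) (ψ₂ : I₂ → J) (hψ₁ : Function.Injective ψ₁) (hψ₂ : Function.Injective ψ₂)
    (k₁ : I₁) (k₂ : I₂) (hk : ψ₁ k₁ = ψ₂ k₂)
    (hmeet : ∀ i j, ψ₁ i = ψ₂ j → i = k₁ ∧ j = k₂)
    (hcover : ∀ k, (∃ i, ψ₁ i = k) ∨ (∃ j, ψ₂ j = k))
    (hP : P = convexHull ℝ (extZero ψ₁ '' X₁ ∪ extZero ψ₂ '' X₂))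
    (hs₁ : ∀ x ∈ convexHull ℝ X₁, ∑ k, x k = 1) (hs₂ : ∀ x ∈ convexHull ℝ X₂, ∑ k, x k = 1)
    (hs : ∀ x ∈ P, ∑ k, x k = 1)
    (M : ℕ) (hM₁ : ∀ x ∈ convexHull ℝ X₁, ∀ k, |x k| ≤ M)
    (hM₂ : ∀ x ∈ convexHull ℝ X₂, ∀ k, |x k| ≤ M)
    (hM : ∀ x ∈ P, ∀ k, |x k| ≤ M)
    (he₁ : Pi.single k₁ (1 : ℝ) ∈ convexHull ℝ X₁) (he₂ : Pi.single k₂ (1 : ℝ) ∈ convexHull ℝ X₂)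
    (hfloor : ∀ (z : I₂ → ℤ) (δ : ℝ), δ < 1 →
      castVec z + Pi.single k₂ δ ∈ coneOver (convexHull ℝ X₂) →
      castVec z ∈ coneOver (convexHull ℝ X₂)) :
    ehrhartSeries P = ehrhartSeries (convexHull ℝ X₁) *
      (ehrhartSeries (convexHull ℝ X₂) * (1 - PowerSeries.X)) := by
  classical
  have hn₁ : X₁.Nonempty := convexHull_nonempty_iff.mp ⟨_, he₁⟩
  have hn₂ : X₂.Nonempty := convexHull_nonempty_iff.mp ⟨_, he₂⟩
  have hn : P.Nonempty := by
    rw [hP, convexHull_nonempty_iff]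
    exact Set.Nonempty.inl (hn₁.image _)
  have hc₁ := convex_convexHull ℝ X₁
  have hc₂ := convex_convexHull ℝ X₂
  set P₁ := convexHull ℝ X₁ with hP₁
  set P₂ := convexHull ℝ X₂ with hP₂
  let S₁ : ℕ → Finset (I₁ → ℤ) := fun t => (lattice_finite hM₁ t).toFinset
  let S₂ : ℕ → Finset (I₂ → ℤ) := fun t => (lattice_finite hM₂ t).toFinset
  let S : ℕ → Finset (J → ℤ) := fun t => (lattice_finite hM t).toFinset
  let B : ℕ → Finset (I₂ → ℤ) := fun t =>
    (S₂ t).filter (fun z => castVec (z - Pi.single k₂ 1) ∉ coneOver P₂)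
  have m₁ : ∀ t z, z ∈ S₁ t ↔ castVec z ∈ coneOver P₁ ∧ ∑ k, z k = t := by
    intro t z; simp only [S₁, Set.Finite.mem_toFinset]; exact mem_smul_iff hs₁
  have m₂ : ∀ t z, z ∈ S₂ t ↔ castVec z ∈ coneOver P₂ ∧ ∑ k, z k = t := by
    intro t z; simp only [S₂, Set.Finite.mem_toFinset]; exact mem_smul_iff hs₂
  have m : ∀ t z, z ∈ S t ↔ castVec z ∈ coneOver P ∧ ∑ k, z k = t := by
    intro t z; simp only [S, Set.Finite.mem_toFinset]; exact mem_smul_iff hs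
  have c₁ : ∀ t, PowerSeries.coeff t (ehrhartSeries P₁) = ((S₁ t).card : ℚ) := by
    intro t
    rw [ehrhart_coeff (convexHull_nonempty_iff.mpr hn₁),
      Set.ncard_eq_toFinset_card _ (lattice_finite hM₁ t)]
  have c₂ : ∀ t, PowerSeries.coeff t (ehrhartSeries P₂) = ((S₂ t).card : ℚ) := by
    intro t
    rw [ehrhart_coeff (convexHull_nonempty_iff.mpr hn₂),
      Set.ncard_eq_toFinset_card _ (lattice_finite hM₂ t)]
  have c : ∀ t, PowerSeries.coeff t (ehrhartSeries P) = ((S t).card : ℚ) := by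
    intro t
    rw [ehrhart_coeff hn, Set.ncard_eq_toFinset_card _ (lattice_finite hM t)]
  -- shifting in the second factor
  have shift : ∀ (z : I₂ → ℤ) (n : ℤ), 0 ≤ n → castVec z ∈ coneOver P₂ →
      castVec (z + Pi.single k₂ n) ∈ coneOver P₂ := by
    intro z n h0 hz
    rw [castVec_add, castVec_single]
    exact castVec_add_single_mem hc₂ he₂ hz (by exact_mod_cast h0)
  have cB : ∀ t, PowerSeries.coeff t (ehrhartSeries P₂ * (1 - PowerSeries.X)) =
      ((B t).card : ℚ) := by
    intro t
    rw [mul_sub, mul_one, map_sub, c₂]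
    have hsplit := Finset.card_filter_add_card_filter_not (s := S₂ t)
      (fun z => castVec (z - Pi.single k₂ 1) ∉ coneOver P₂)
    have hB : (S₂ t).filter (fun z => castVec (z - Pi.single k₂ 1) ∉ coneOver P₂) = B t := rfl
    rw [hB] at hsplit
    rw [← hsplit]
    push_cast
    rcases t with _ | t
    · rw [PowerSeries.coeff_zero_mul_X]
      have : (S₂ 0).filter (fun z => ¬ castVec (z - Pi.single k₂ 1) ∉ coneOver P₂) = ∅ := by
        apply Finset.filter_false_of_mem
        intro z hz hh
        rw [not_not] at hh
        have h1 := sum_nonneg_of_cone hs₂ hh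
        have h2 := ((m₂ _ _).1 hz).2
        simp [Finset.sum_sub_distrib, h2] at h1
      rw [this]; simp
    · rw [PowerSeries.coeff_succ_mul_X, c₂]
      have : ((S₂ (t+1)).filter (fun z => ¬ castVec (z - Pi.single k₂ 1) ∉ coneOver P₂)).card
          = (S₂ t).card := by
        symm
        apply Finset.card_bij (fun z _ => z + Pi.single k₂ 1)
        · intro z hz
          rw [m₂] at hz
          rw [Finset.mem_filter, m₂, not_not]
          refine ⟨⟨shift z 1 zero_le_one hz.1, ?_⟩, ?_⟩
          · simp [Finset.sum_add_distrib, hz.2]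
          · simpa using hz.1
        · intro a _ b _ h; simpa using h
        · intro b hb
          rw [Finset.mem_filter, m₂, not_not] at hb
          refine ⟨b - Pi.single k₂ 1, ?_, by simp⟩
          rw [m₂]
          refine ⟨hb.2, ?_⟩
          simp [Finset.sum_sub_distrib, hb.1.2]
      rw [this]; ring
  ext t
  rw [PowerSeries.coeff_mul, c]
  simp only [c₁, cB]
  have main : ((Finset.HasAntidiagonal.antidiagonal t).sigma (fun p => S₁ p.1 ×ˢ B p.2)).card = (S t).card := by
    apply Finset.card_bij (fun q _ => extZero ψ₁ q.2.1 + extZero ψ₂ q.2.2)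
    · rintro ⟨⟨i, j⟩, a, b⟩ h
      simp only [Finset.mem_sigma, Finset.HasAntidiagonal.mem_antidiagonal, Finset.mem_product, B,
        Finset.mem_filter, m₁, m₂] at h
      obtain ⟨hij, ⟨ha, hai⟩, ⟨hb, hbj⟩, -⟩ := h
      rw [m]
      constructor
      · rw [hP, cone_glue hψ₁ hψ₂ hn₁ hn₂]
        exact ⟨_, ha, _, hb, by simp [castVec_add, castVec_extZero hψ₁, castVec_extZero hψ₂]⟩
      · simp only [Pi.add_apply, Finset.sum_add_distrib, sum_extZero hψ₁, sum_extZero hψ₂, hai, hbj]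
        exact_mod_cast hij
    · rintro ⟨⟨i, j⟩, a, b⟩ h ⟨⟨i', j'⟩, a', b'⟩ h' heq
      simp only [Finset.mem_sigma, Finset.HasAntidiagonal.mem_antidiagonal, Finset.mem_product, B,
        Finset.mem_filter, m₁, m₂] at h h'
      obtain ⟨hij, ⟨ha, hai⟩, ⟨hb, hbj⟩, hbp⟩ := h
      obtain ⟨hij', ⟨ha', hai'⟩, ⟨hb', hbj'⟩, hbp'⟩ := h'
      simp only at heq
      have ea : ∀ k, k ≠ k₁ → a k = a' k := by
        intro k hne
        have := congrFun heq (ψ₁ k)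
        have hno : ¬ ∃ j, ψ₂ j = ψ₁ k := fun ⟨j, hj⟩ => hne (hmeet _ _ hj.symm).1
        simpa [extZero_apply hψ₁, extZero_apply' _ _ hno] using this
      have eb : ∀ k, k ≠ k₂ → b k = b' k := by
        intro k hne
        have := congrFun heq (ψ₂ k)
        have hno : ¬ ∃ j, ψ₁ j = ψ₂ k := fun ⟨j, hj⟩ => hne (hmeet _ _ hj).2
        simpa [extZero_apply hψ₂, extZero_apply' _ _ hno] using this
      have eab : a k₁ + b k₂ = a' k₁ + b' k₂ := by
        have := congrFun heq (ψ₁ k₁)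
        simp only [Pi.add_apply, extZero_apply hψ₁] at this
        rw [hk] at this
        simpa [extZero_apply hψ₂] using this
      have aux : ∀ b b' : I₂ → ℤ, (∀ k, k ≠ k₂ → b k = b' k) → castVec b ∈ coneOver P₂ →
          castVec (b' - Pi.single k₂ 1) ∉ coneOver P₂ → b' k₂ ≤ b k₂ := by
        intro b b' e hb hb'
        by_contra hlt
        push Not at hlt
        apply hb'
        have : b' - Pi.single k₂ 1 = b + Pi.single k₂ (b' k₂ - b k₂ - 1) := by
          funext k
          by_cases hkk : k = k₂
          · subst hkk; simp; ring
          · simp [hkk, e k hkk]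
        rw [this]
        exact shift _ _ (by omega) hb
      have hbb : b k₂ = b' k₂ :=
        le_antisymm (aux b' b (fun k h => (eb k h).symm) hb' hbp) (aux b b' eb hb hbp')
      have Eb : b = b' := by
        funext k
        by_cases hkk : k = k₂
        · rw [hkk, hbb]
        · exact eb k hkk
      have Ea : a = a' := by
        funext k
        by_cases hkk : k = k₁
        · rw [hkk]; omega
        · exact ea k hkk
      subst Ea Eb
      have : i = i' := by rw [hai] at hai'; exact_mod_cast hai'
      have : j = j' := by rw [hbj] at hbj'; exact_mod_cast hbj'
      subst_vars
      rfl
    · intro x hx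
      rw [m, hP, cone_glue hψ₁ hψ₂ hn₁ hn₂] at hx
      obtain ⟨⟨a, ha, b, hb, hab⟩, hxt⟩ := hx
      have ea : ∀ k, k ≠ k₁ → a k = x (ψ₁ k) := by
        intro k hne
        have := congrFun hab (ψ₁ k)
        have hno : ¬ ∃ j, ψ₂ j = ψ₁ k := fun ⟨j, hj⟩ => hne (hmeet _ _ hj.symm).1
        simpa [extZero_apply hψ₁, extZero_apply' _ _ hno, castVec] using this.symm
      have eb : ∀ k, k ≠ k₂ → b k = x (ψ₂ k) := by
        intro k hne
        have := congrFun hab (ψ₂ k)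
        have hno : ¬ ∃ j, ψ₁ j = ψ₂ k := fun ⟨j, hj⟩ => hne (hmeet _ _ hj).2
        simpa [extZero_apply hψ₂, extZero_apply' _ _ hno, castVec] using this.symm
      have eab : (x (ψ₁ k₁) : ℝ) = a k₁ + b k₂ := by
        have := congrFun hab (ψ₁ k₁)
        simp only [Pi.add_apply, extZero_apply hψ₁] at this
        rw [hk] at this
        rw [hk]
        simpa [extZero_apply hψ₂, castVec] using this
      let z : I₂ → ℤ := Function.update (fun k => x (ψ₂ k)) k₂ ⌊b k₂⌋
      have hz : castVec z ∈ coneOver P₂ := by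
        apply hfloor z (Int.fract (b k₂)) (Int.fract_lt_one _)
        have : castVec z + Pi.single k₂ (Int.fract (b k₂)) = b := by
          funext k
          by_cases hkk : k = k₂
          · subst hkk; simp [z, castVec]
          · simp [z, castVec, hkk, eb k hkk]
        rwa [this]
      obtain ⟨n, hn0, hnp⟩ := prim_exists hs₂ k₂ hz
      set b₀ := z - Pi.single k₂ (n : ℤ) with hb₀
      have hb₀k : b₀ k₂ = ⌊b k₂⌋ - n := by simp [hb₀, z]
      let a₀ : I₁ → ℤ := Function.update (fun k => x (ψ₁ k)) k₁ (x (ψ₁ k₁) - b₀ k₂)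
      have ha₀ : castVec a₀ ∈ coneOver P₁ := by
        have : castVec a₀ = a + Pi.single k₁ (b k₂ - b₀ k₂) := by
          funext k
          by_cases hkk : k = k₁
          · subst hkk; simp [a₀, castVec, eab]; ring
          · simp [a₀, castVec, hkk, ea k hkk]
        rw [this]
        apply castVec_add_single_mem hc₁ he₁ ha
        rw [hb₀k]; push_cast
        have := Int.floor_le (b k₂)
        have : (0 : ℝ) ≤ n := by positivity
        linarith
      have hx0 : extZero ψ₁ a₀ + extZero ψ₂ b₀ = x := by
        funext k
        by_cases hkk : k = ψ₁ k₁
        · subst hkk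
          simp only [Pi.add_apply, extZero_apply hψ₁]
          rw [hk, extZero_apply hψ₂, ← hk]
          simp [a₀]
        · rcases hcover k with ⟨i, rfl⟩ | ⟨j, rfl⟩
          · have hne : i ≠ k₁ := fun h => hkk (by rw [h])
            have hno : ¬ ∃ j, ψ₂ j = ψ₁ i := fun ⟨j, hj⟩ => hne (hmeet _ _ hj.symm).1
            simp [extZero_apply hψ₁, extZero_apply' _ _ hno, a₀, hne]
          · have hne : j ≠ k₂ := fun h => hkk (by rw [h, hk])
            have hno : ¬ ∃ i, ψ₁ i = ψ₂ j := fun ⟨i, hj⟩ => hne (hmeet _ _ hj).2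
            simp [extZero_apply hψ₂, extZero_apply' _ _ hno, b₀, z, hne]
      have p₁ := sum_nonneg_of_cone hs₁ ha₀
      have p₂ := sum_nonneg_of_cone hs₂ hn0
      have hsum : ∑ k, a₀ k + ∑ k, b₀ k = t := by
        rw [← hxt, ← hx0]
        simp only [Pi.add_apply, Finset.sum_add_distrib, sum_extZero hψ₁, sum_extZero hψ₂]
      refine ⟨⟨((∑ k, a₀ k).toNat, (∑ k, b₀ k).toNat), a₀, b₀⟩, ?_, hx0⟩
      simp only [Finset.mem_sigma, Finset.HasAntidiagonal.mem_antidiagonal, Finset.mem_product, B,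
        Finset.mem_filter, m₁, m₂]
      refine ⟨by omega, ⟨ha₀, by omega⟩, ⟨hn0, by omega⟩, hnp⟩
  rw [← main, Finset.card_sigma]
  push_cast
  simp

/-- The lower bound contributed by an edge with ends `e` and edge coordinate `c` to the
inequality indexed by the vertex set `A`. -/
noncomputable def edgeBound {V : Type*} (e : Sym2 V) (A : Finset V) (c : ℝ) : ℝ := by
  classical
  exact if ∀ i ∈ e, i ∈ A then max 0 (-2 * c) else if ∃ i ∈ e, i ∈ A then -c else 0

lemma edgeBound_mk {V : Type*} [DecidableEq V] (i j : V) (A : Finset V) (c : ℝ) :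
    edgeBound s(i, j) A c = if i ∈ A then (if j ∈ A then max 0 (-2 * c) else -c)
      else (if j ∈ A then -c else 0) := by
  unfold edgeBound
  by_cases hi : i ∈ A <;> by_cases hj : j ∈ A <;> simp [hi, hj]

lemma edgeBound_zero {V : Type*} (e : Sym2 V) (A : Finset V) : edgeBound e A 0 = 0 := by
  classical
  induction e with | _ i j => rw [edgeBound_mk]; split_ifs <;> simp

lemma edgeBound_super {V : Type*} [DecidableEq V] (e : Sym2 V) (A B : Finset V) (c : ℝ) :
    edgeBound e A c + edgeBound e B c ≤ edgeBound e (A ∪ B) c + edgeBound e (A ∩ B) c := by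
  induction e with | _ i j =>
  have h1 := le_max_left 0 (-2 * c)
  have h2 := le_max_right 0 (-2 * c)
  simp only [edgeBound_mk, Finset.mem_union, Finset.mem_inter]
  by_cases a : i ∈ A <;> by_cases b : j ∈ A <;> by_cases a' : i ∈ B <;> by_cases b' : j ∈ B <;>
    simp only [a, b, a', b', if_true, if_false, or_true, true_or, or_false, and_true, and_false,
      or_self, and_self] <;> linarith

lemma edgeBound_convex {V : Type*} (e : Sym2 V) (A : Finset V) (c d s t : ℝ)
    (hs : 0 ≤ s) (ht : 0 ≤ t) :
    edgeBound e A (s * c + t * d) ≤ s * edgeBound e A c + t * edgeBound e A d := by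
  classical
  induction e with | _ i j =>
  simp only [edgeBound_mk]
  have h1 := mul_le_mul_of_nonneg_left (le_max_left 0 (-2 * c)) hs
  have h2 := mul_le_mul_of_nonneg_left (le_max_right 0 (-2 * c)) hs
  have h3 := mul_le_mul_of_nonneg_left (le_max_left 0 (-2 * d)) ht
  have h4 := mul_le_mul_of_nonneg_left (le_max_right 0 (-2 * d)) ht
  split_ifs
  · apply max_le <;> linarith
  all_goals linarith

lemma edgeBound_int {V : Type*} (e : Sym2 V) (A : Finset V) (c : ℤ) :
    ∃ n : ℤ, edgeBound e A c = n := by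
  classical
  induction e with | _ i j =>
  rw [edgeBound_mk]
  split_ifs
  · exact ⟨max 0 (-2 * c), by push_cast; rfl⟩
  · exact ⟨-c, by push_cast; rfl⟩
  · exact ⟨-c, by push_cast; rfl⟩
  · exact ⟨0, by push_cast; rfl⟩

/-- The inequality description of the cone over the cosmological polytope. -/
def ineqCone {V E : Type*} [Fintype E] (ends : E → Sym2 V) : Set ((V ⊕ E) → ℝ) :=
  {x | ∀ A : Finset V, ∑ f, edgeBound (ends f) A (x (Sum.inr f)) ≤ ∑ i ∈ A, x (Sum.inl i)}

lemma ineqCone_comb {V E : Type*} [Fintype E] (ends : E → Sym2 V) {x y : (V ⊕ E) → ℝ}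
    (hx : x ∈ ineqCone ends) (hy : y ∈ ineqCone ends) {s t : ℝ} (hs : 0 ≤ s) (ht : 0 ≤ t) :
    s • x + t • y ∈ ineqCone ends := by
  intro A
  simp only [Pi.add_apply, Pi.smul_apply, smul_eq_mul, Finset.sum_add_distrib, ← Finset.mul_sum]
  calc _ ≤ ∑ f, (s * edgeBound (ends f) A (x (Sum.inr f)) +
        t * edgeBound (ends f) A (y (Sum.inr f))) :=
        Finset.sum_le_sum fun f _ => edgeBound_convex _ _ _ _ _ _ hs ht
    _ ≤ _ := by
        rw [Finset.sum_add_distrib, ← Finset.mul_sum, ← Finset.mul_sum]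
        have h1 := mul_le_mul_of_nonneg_left (hx A) hs
        have h2 := mul_le_mul_of_nonneg_left (hy A) ht
        linarith

lemma edgePoint_mem {V E : Type*} [Fintype E] [DecidableEq V] [DecidableEq E] (ends : E → Sym2 V)
    {f : E} {i j : V} (hf : ends f = s(i, j)) {p q c : ℝ} (hpq : 0 ≤ p + q) (hp : 0 ≤ p + c)
    (hq : 0 ≤ q + c) :
    (Pi.single (Sum.inl i) p + Pi.single (Sum.inl j) q + Pi.single (Sum.inr f) c :
      (V ⊕ E) → ℝ) ∈ ineqCone ends := by
  intro A
  have e1 : ∑ f', edgeBound (ends f') A ((Pi.single (Sum.inl i) p + Pi.single (Sum.inl j) q +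
      Pi.single (Sum.inr f) c : (V ⊕ E) → ℝ) (Sum.inr f')) = edgeBound s(i, j) A c := by
    rw [Finset.sum_eq_single f]
    · simp [hf]
    · intro f' _ hne
      simp [hne, edgeBound_zero]
    · simp
  have e2 : ∀ (i : V) (p : ℝ), ∑ k ∈ A, (Pi.single (Sum.inl i) p : (V ⊕ E) → ℝ) (Sum.inl k) =
      if i ∈ A then p else 0 := by
    intro i p
    simp [Pi.single_apply]
  rw [e1]
  simp only [Pi.add_apply, Finset.sum_add_distrib, e2]
  rw [edgeBound_mk]
  simp only [ne_eq, reduceCtorEq, not_false_eq_true, Pi.single_eq_of_ne, Finset.sum_const_zero]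
  split_ifs
  · apply max_le <;> linarith
  all_goals linarith

lemma vertex_form {V E : Type*} [DecidableEq V] [DecidableEq E]
    {ends : E → Sym2 V} {x : (V ⊕ E) → ℝ} (hx : x ∈ cosmoVertices ends) :
    ∃ (f : E) (i j : V) (p q c : ℝ), ends f = s(i, j) ∧ 0 ≤ p + q ∧ 0 ≤ p + c ∧ 0 ≤ q + c ∧
      p + q + c = 1 ∧ |p| ≤ 1 ∧ |q| ≤ 1 ∧ |c| ≤ 1 ∧
      x = Pi.single (Sum.inl i) p + Pi.single (Sum.inl j) q + Pi.single (Sum.inr f) c := by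
  obtain ⟨f, i, j, hf, h | h | h⟩ := hx
  · refine ⟨f, i, j, 1, 1, -1, hf, ?_, ?_, ?_, ?_, ?_, ?_, ?_, ?_⟩ <;> norm_num
    rw [h, sub_eq_add_neg, Pi.single_neg]
  · refine ⟨f, i, j, 1, -1, 1, hf, ?_, ?_, ?_, ?_, ?_, ?_, ?_, ?_⟩ <;> norm_num
    rw [h, sub_eq_add_neg, Pi.single_neg]
  · refine ⟨f, i, j, -1, 1, 1, hf, ?_, ?_, ?_, ?_, ?_, ?_, ?_, ?_⟩ <;> norm_num
    rw [h, Pi.single_neg]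

lemma cosmo_sum {V E : Type*} [Fintype V] [Fintype E] [DecidableEq V] [DecidableEq E]
    (ends : E → Sym2 V) : ∀ x ∈ convexHull ℝ (cosmoVertices ends), ∑ k, x k = 1 := by
  have : convexHull ℝ (cosmoVertices ends) ⊆ {x | ∑ k, x k = 1} := by
    apply convexHull_min
    · intro x hx
      obtain ⟨f, i, j, p, q, c, -, -, -, -, h, -, -, -, rfl⟩ := vertex_form hx
      simp only [Set.mem_ofPred_eq, Pi.add_apply, Finset.sum_add_distrib]
      rw [Finset.sum_pi_single', Finset.sum_pi_single', Finset.sum_pi_single']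
      simpa using h
    · intro x hx y hy a b _ _ hab
      simp only [Set.mem_ofPred_eq] at hx hy
      simp only [Set.mem_ofPred_eq, Pi.add_apply, Pi.smul_apply, smul_eq_mul,
        Finset.sum_add_distrib, ← Finset.mul_sum, hx, hy]
      linarith
  exact this

lemma cosmo_bound {V E : Type*} [Fintype V] [Fintype E] [DecidableEq V] [DecidableEq E]
    (ends : E → Sym2 V) : ∀ x ∈ convexHull ℝ (cosmoVertices ends), ∀ k, |x k| ≤ (3 : ℕ) := by
  have : convexHull ℝ (cosmoVertices ends) ⊆ Set.Icc (fun _ => (-3 : ℝ)) (fun _ => 3) := by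
    apply convexHull_min _ (convex_Icc _ _)
    intro x hx
    obtain ⟨f, i, j, p, q, c, -, -, -, -, -, hp, hq, hc, rfl⟩ := vertex_form hx
    have aux : ∀ (m : V ⊕ E) (r : ℝ) (k : V ⊕ E), |r| ≤ 1 →
        |(Pi.single m r : (V ⊕ E) → ℝ) k| ≤ 1 := by
      intro m r k hr
      rw [Pi.single_apply]; split_ifs
      · exact hr
      · simp
    constructor <;> intro k <;>
    · have h1 := abs_le.mp (aux (Sum.inl i) p k hp)
      have h2 := abs_le.mp (aux (Sum.inl j) q k hq)
      have h3 := abs_le.mp (aux (Sum.inr f) c k hc)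
      simp only [Pi.add_apply]
      linarith [h1.1, h1.2, h2.1, h2.2, h3.1, h3.2]
  intro x hx k
  have h := this hx
  rw [abs_le]
  exact ⟨by simpa using h.1 k, by simpa using h.2 k⟩

lemma cone_sub_ineq {V E : Type*} [Fintype V] [Fintype E] [DecidableEq V] [DecidableEq E]
    (ends : E → Sym2 V) : coneOver (convexHull ℝ (cosmoVertices ends)) ⊆ ineqCone ends := by
  have h : convexHull ℝ (cosmoVertices ends) ⊆ ineqCone ends := by
    apply convexHull_min
    · intro x hx
      obtain ⟨f, i, j, p, q, c, hf, h1, h2, h3, -, -, -, -, rfl⟩ := vertex_form hx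
      exact edgePoint_mem ends hf h1 h2 h3
    · intro x hx y hy a b ha hb _
      exact ineqCone_comb ends hx hy ha hb
  rintro _ ⟨t, ht, y, hy, rfl⟩
  simpa using ineqCone_comb ends (h hy) (h hy) ht le_rfl

lemma vertices_mem {V E : Type*} [DecidableEq V] [DecidableEq E] (ends : E → Sym2 V)
    {f : E} {i j : V} (hf : ends f = s(i, j)) :
    (Pi.single (Sum.inl i) 1 + Pi.single (Sum.inl j) 1 - Pi.single (Sum.inr f) 1 :
      (V ⊕ E) → ℝ) ∈ convexHull ℝ (cosmoVertices ends) ∧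
    (Pi.single (Sum.inl i) 1 - Pi.single (Sum.inl j) 1 + Pi.single (Sum.inr f) 1 :
      (V ⊕ E) → ℝ) ∈ convexHull ℝ (cosmoVertices ends) ∧
    (-Pi.single (Sum.inl i) 1 + Pi.single (Sum.inl j) 1 + Pi.single (Sum.inr f) 1 :
      (V ⊕ E) → ℝ) ∈ convexHull ℝ (cosmoVertices ends) := by
  refine ⟨subset_convexHull ℝ _ ?_, subset_convexHull ℝ _ ?_, subset_convexHull ℝ _ ?_⟩
  · exact ⟨f, i, j, hf, Or.inl rfl⟩
  · exact ⟨f, i, j, hf, Or.inr (Or.inl rfl)⟩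
  · exact ⟨f, i, j, hf, Or.inr (Or.inr rfl)⟩

lemma edgePoint_cone {V E : Type*} [Fintype E] [DecidableEq V] [DecidableEq E] (ends : E → Sym2 V)
    {f : E} {i j : V} (hf : ends f = s(i, j)) {p q c : ℝ} (hpq : 0 ≤ p + q) (hp : 0 ≤ p + c)
    (hq : 0 ≤ q + c) :
    (Pi.single (Sum.inl i) p + Pi.single (Sum.inl j) q + Pi.single (Sum.inr f) c :
      (V ⊕ E) → ℝ) ∈ coneOver (convexHull ℝ (cosmoVertices ends)) := by
  have hc := convex_convexHull ℝ (cosmoVertices ends)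
  obtain ⟨v1, v2, v3⟩ := vertices_mem ends hf
  have h1 := coneOver_smul_of_mem (by linarith : 0 ≤ (p + q) / 2) v1
  have h2 := coneOver_smul_of_mem (by linarith : 0 ≤ (p + c) / 2) v2
  have h3 := coneOver_smul_of_mem (by linarith : 0 ≤ (q + c) / 2) v3
  have h := coneOver_add hc (coneOver_add hc h1 h2) h3
  convert h using 1
  funext k
  simp only [Pi.add_apply, Pi.smul_apply, Pi.sub_apply, Pi.neg_apply, Pi.single_apply, smul_eq_mul]
  split_ifs <;> ring

lemma single_mem_cosmo {V E : Type*} [DecidableEq V] [DecidableEq E]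
    (ends : E → Sym2 V) (hiso : ∀ v : V, ∃ f : E, v ∈ ends f) (v : V) :
    Pi.single (Sum.inl v) (1 : ℝ) ∈ convexHull ℝ (cosmoVertices ends) := by
  obtain ⟨f, hf⟩ := hiso v
  obtain ⟨j, hj⟩ := Sym2.mem_iff_exists.mp hf
  obtain ⟨h1, h2, -⟩ := vertices_mem ends hj
  have h := convex_convexHull ℝ (cosmoVertices ends) h1 h2
    (by norm_num : (0:ℝ) ≤ 1/2) (by norm_num : (0:ℝ) ≤ 1/2) (by norm_num)
  convert h using 1
  funext k
  simp only [Pi.add_apply, Pi.smul_apply, Pi.sub_apply, smul_eq_mul]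
  ring

lemma ineq_decomp {V E : Type*} [Fintype V] [Fintype E] [DecidableEq V] [DecidableEq E]
    (ends : E → Sym2 V) (hiso : ∀ v : V, ∃ f : E, v ∈ ends f) (v₀ : V) (c : E → ℝ) (F : Finset E) :
    ∀ x : V → ℝ, (∀ A : Finset V, ∑ f ∈ F, edgeBound (ends f) A (c f) ≤ ∑ i ∈ A, x i) →
      (Sum.elim x 0 + ∑ f ∈ F, Pi.single (Sum.inr f) (c f) : (V ⊕ E) → ℝ) ∈
        coneOver (convexHull ℝ (cosmoVertices ends)) := by
  have hc := convex_convexHull ℝ (cosmoVertices ends)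
  induction F using Finset.induction_on with
  | empty =>
    intro x hx
    have hx0 : ∀ i, 0 ≤ x i := fun i => by simpa using hx {i}
    have key : ∀ S : Finset V, ∑ i ∈ S, (Pi.single (Sum.inl i) (x i) : (V ⊕ E) → ℝ) ∈
        coneOver (convexHull ℝ (cosmoVertices ends)) := by
      intro S
      induction S using Finset.induction_on with
      | empty =>
        have := coneOver_smul_of_mem le_rfl (single_mem_cosmo ends hiso v₀)
        simpa using this
      | insert a S ha ih =>
        rw [Finset.sum_insert ha, add_comm]
        exact castVec_add_single_mem hc (single_mem_cosmo ends hiso a) ih (hx0 a)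
    convert key Finset.univ using 1
    funext k
    rcases k with k | k
    · simp [Finset.sum_apply, Pi.single_apply]
    · simp [Finset.sum_apply]
  | insert f F hfF ih =>
    intro x hx
    obtain ⟨i, j, hf⟩ : ∃ i j, ends f = s(i, j) := by
      induction ends f with | _ i j => exact ⟨i, j, rfl⟩
    set m := max 0 (-2 * c f) with hm
    have hm1 : 0 ≤ m := le_max_left _ _
    have hm2 : -2 * c f ≤ m := le_max_right _ _
    have step : ∃ p q : ℝ, p + q = m ∧ 0 ≤ p + c f ∧ 0 ≤ q + c f ∧
        ∀ A : Finset V, ∑ f ∈ F, edgeBound (ends f) A (c f) ≤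
          ∑ k ∈ A, x k - (if i ∈ A then p else 0) - (if j ∈ A then q else 0) := by
      have hx' : ∀ A : Finset V, edgeBound s(i, j) A (c f) + ∑ f ∈ F, edgeBound (ends f) A (c f) ≤
          ∑ k ∈ A, x k := by
        intro A
        have := hx A
        rwa [Finset.sum_insert hfF, hf] at this
      simp only [edgeBound_mk, ← hm] at hx'
      generalize hG : (fun A : Finset V => ∑ f ∈ F, edgeBound (ends f) A (c f)) = G
      have hG' : ∀ A, ∑ f ∈ F, edgeBound (ends f) A (c f) = G A := fun A => by rw [← hG]
      have hsup : ∀ A B, G A + G B ≤ G (A ∪ B) + G (A ∩ B) := by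
        intro A B
        rw [← hG]
        simp only [← Finset.sum_add_distrib]
        exact Finset.sum_le_sum fun f _ => edgeBound_super _ _ _ _
      simp only [hG'] at hx' ⊢
      by_cases hij : i = j
      · subst hij
        refine ⟨m / 2, m / 2, by ring, by linarith, by linarith, fun A => ?_⟩
        have := hx' A
        split_ifs at this ⊢ <;> linarith
      · obtain ⟨B, hB, hBmin⟩ := Finset.exists_min_image
          (Finset.univ.filter (fun A : Finset V => i ∈ A ∧ j ∉ A))
          (fun A => ∑ k ∈ A, x k - G A) ⟨{i}, by simp [Ne.symm hij]⟩
        simp only [Finset.mem_filter, Finset.mem_univ, true_and] at hB hBmin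
        set P := ∑ k ∈ B, x k - G B with hP
        have hPc : -c f ≤ P := by
          have := hx' B
          simp only [hB.1, hB.2, if_true, if_false] at this
          linarith
        refine ⟨min P (m + c f), m - min P (m + c f), by ring, ?_, ?_, ?_⟩
        · have : -c f ≤ min P (m + c f) := le_min hPc (by linarith)
          linarith
        · have := min_le_right P (m + c f)
          linarith
        · intro A
          have hA := hx' A
          by_cases hi : i ∈ A <;> by_cases hj : j ∈ A <;>
            simp only [hi, hj, if_true, if_false] at hA ⊢
          · linarith
          · have h1 := hBmin A ⟨hi, hj⟩
            have h2 := min_le_left P (m + c f)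
            linarith
          · rcases min_choice P (m + c f) with h | h <;> rw [h]
            · have h1 := hsup A B
              have h2 := hx' (A ∪ B)
              have h3 := hx' (A ∩ B)
              have h4 := Finset.sum_union_inter (s₁ := A) (s₂ := B) (f := x)
              simp only [Finset.mem_union, Finset.mem_inter, hi, hj, hB.1, hB.2, or_true, true_or,
                if_true, and_false, false_and, if_false] at h2 h3
              linarith
            · linarith
          · linarith
    obtain ⟨p, q, hpq, hp, hq, hA⟩ := step
    have e2 : ∀ (A : Finset V) (i : V) (p : ℝ), ∑ k ∈ A, (Pi.single i p : V → ℝ) k =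
        if i ∈ A then p else 0 := by
      intro A i p
      simp [Pi.single_apply]
    have h1 := ih (x - Pi.single i p - Pi.single j q) (fun A => by
      simpa [Finset.sum_sub_distrib, e2] using hA A)
    have h2 := edgePoint_cone ends hf (hpq ▸ hm1) hp hq
    have h := coneOver_add hc h1 h2
    convert h using 1
    rw [Finset.sum_insert hfF]
    funext k
    rcases k with k | k
    · simp [Pi.single_apply]
    · simp [Pi.single_apply]; ring

lemma ineq_sub_cone {V E : Type*} [Fintype V] [Fintype E] [DecidableEq V] [DecidableEq E]
    (ends : E → Sym2 V) (hiso : ∀ v : V, ∃ f : E, v ∈ ends f) (v₀ : V) :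
    ineqCone ends ⊆ coneOver (convexHull ℝ (cosmoVertices ends)) := by
  intro x hx
  have h := ineq_decomp ends hiso v₀ (fun f => x (Sum.inr f)) Finset.univ (fun i => x (Sum.inl i)) hx
  convert h using 1
  funext k
  rcases k with k | k
  · simp [Finset.sum_apply]
  · simp [Finset.sum_apply, Pi.single_apply]

lemma cosmo_floor {V E : Type*} [Fintype V] [Fintype E] [DecidableEq V] [DecidableEq E]
    (ends : E → Sym2 V) (hiso : ∀ v : V, ∃ f : E, v ∈ ends f) (v : V) (z : V ⊕ E → ℤ) (δ : ℝ)
    (hδ : δ < 1) (h : castVec z + Pi.single (Sum.inl v) δ ∈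
      coneOver (convexHull ℝ (cosmoVertices ends))) :
    castVec z ∈ coneOver (convexHull ℝ (cosmoVertices ends)) := by
  apply ineq_sub_cone ends hiso v
  intro A
  have hA := cone_sub_ineq ends h A
  choose n hn using fun f => edgeBound_int (ends f) A (z (Sum.inr f))
  have e2 : ∑ k ∈ A, (Pi.single (Sum.inl v) δ : (V ⊕ E) → ℝ) (Sum.inl k) =
      if v ∈ A then δ else 0 := by
    simp [Pi.single_apply]
  simp only [Pi.add_apply, Finset.sum_add_distrib, e2, castVec, ne_eq, reduceCtorEq,
    not_false_eq_true, Pi.single_eq_of_ne, add_zero, hn] at hA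
  simp only [castVec, hn]
  have hlt : (∑ f, (n f : ℝ)) < ∑ i ∈ A, (z (Sum.inl i) : ℝ) + 1 := by
    split_ifs at hA <;> linarith
  have : ∑ f, n f < ∑ i ∈ A, z (Sum.inl i) + 1 := by exact_mod_cast hlt
  have : ∑ f, n f ≤ ∑ i ∈ A, z (Sum.inl i) := by omega
  exact_mod_cast this

lemma cosmoVertices_oneSum {V₁ E₁ V₂ E₂ W : Type*}
    [DecidableEq V₁] [DecidableEq E₁] [DecidableEq V₂] [DecidableEq E₂] [DecidableEq W]
    (ends₁ : E₁ → Sym2 V₁) (ends₂ : E₂ → Sym2 V₂) (φ₁ : V₁ → W) (φ₂ : V₂ → W)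
    (hφ₁ : Function.Injective φ₁) (hφ₂ : Function.Injective φ₂) :
    cosmoVertices (oneSumEnds ends₁ ends₂ φ₁ φ₂) =
      extZero (Sum.map φ₁ (Sum.inl : E₁ → E₁ ⊕ E₂)) '' cosmoVertices ends₁ ∪
      extZero (Sum.map φ₂ (Sum.inr : E₂ → E₁ ⊕ E₂)) '' cosmoVertices ends₂ := by
  have i₁ : Function.Injective (Sum.map φ₁ (Sum.inl : E₁ → E₁ ⊕ E₂)) :=
    hφ₁.sumMap Sum.inl_injective
  have i₂ : Function.Injective (Sum.map φ₂ (Sum.inr : E₂ → E₁ ⊕ E₂)) :=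
    hφ₂.sumMap Sum.inr_injective
  have a₁ : ∀ a b, extZero (Sum.map φ₁ (Sum.inl : E₁ → E₁ ⊕ E₂)) (a + b : _ → ℝ) = _ :=
    (extLin _ i₁).map_add
  have a₂ : ∀ a b, extZero (Sum.map φ₂ (Sum.inr : E₂ → E₁ ⊕ E₂)) (a + b : _ → ℝ) = _ :=
    (extLin _ i₂).map_add
  have b₁ : ∀ a b, extZero (Sum.map φ₁ (Sum.inl : E₁ → E₁ ⊕ E₂)) (a - b : _ → ℝ) = _ :=
    (extLin _ i₁).map_sub
  have b₂ : ∀ a b, extZero (Sum.map φ₂ (Sum.inr : E₂ → E₁ ⊕ E₂)) (a - b : _ → ℝ) = _ :=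
    (extLin _ i₂).map_sub
  have n₁ : ∀ a, extZero (Sum.map φ₁ (Sum.inl : E₁ → E₁ ⊕ E₂)) (-a : _ → ℝ) = _ :=
    (extLin _ i₁).map_neg
  have n₂ : ∀ a, extZero (Sum.map φ₂ (Sum.inr : E₂ → E₁ ⊕ E₂)) (-a : _ → ℝ) = _ :=
    (extLin _ i₂).map_neg
  simp only [extLin_apply] at a₁ a₂ b₁ b₂ n₁ n₂
  apply Set.Subset.antisymm
  · rintro x ⟨f | f, i, j, hf, h⟩
    · left
      simp only [oneSumEnds, Sum.elim_inl] at hf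
      obtain ⟨i', j', hf'⟩ : ∃ i' j', ends₁ f = s(i', j') := by
        induction ends₁ f with | _ i j => exact ⟨i, j, rfl⟩
      obtain ⟨i', j', hf', rfl, rfl⟩ : ∃ i' j', ends₁ f = s(i', j') ∧ φ₁ i' = i ∧ φ₁ j' = j := by
        rw [hf', Sym2.map_mk, Sym2.eq_iff] at hf
        rcases hf with ⟨rfl, rfl⟩ | ⟨rfl, rfl⟩
        · exact ⟨i', j', hf', rfl, rfl⟩
        · exact ⟨j', i', by rw [hf', Sym2.eq_swap], rfl, rfl⟩
      rcases h with h | h | h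
      · exact ⟨_, ⟨f, i', j', hf', Or.inl rfl⟩, by
          rw [h]; simp [a₁, b₁, extZero_single i₁]⟩
      · exact ⟨_, ⟨f, i', j', hf', Or.inr (Or.inl rfl)⟩, by
          rw [h]; simp [a₁, b₁, extZero_single i₁]⟩
      · exact ⟨_, ⟨f, i', j', hf', Or.inr (Or.inr rfl)⟩, by
          rw [h]; simp [a₁, n₁, extZero_single i₁]⟩
    · right
      simp only [oneSumEnds, Sum.elim_inr] at hf
      obtain ⟨i', j', hf'⟩ : ∃ i' j', ends₂ f = s(i', j') := by
        induction ends₂ f with | _ i j => exact ⟨i, j, rfl⟩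
      obtain ⟨i', j', hf', rfl, rfl⟩ : ∃ i' j', ends₂ f = s(i', j') ∧ φ₂ i' = i ∧ φ₂ j' = j := by
        rw [hf', Sym2.map_mk, Sym2.eq_iff] at hf
        rcases hf with ⟨rfl, rfl⟩ | ⟨rfl, rfl⟩
        · exact ⟨i', j', hf', rfl, rfl⟩
        · exact ⟨j', i', by rw [hf', Sym2.eq_swap], rfl, rfl⟩
      rcases h with h | h | h
      · exact ⟨_, ⟨f, i', j', hf', Or.inl rfl⟩, by
          rw [h]; simp [a₂, b₂, extZero_single i₂]⟩
      · exact ⟨_, ⟨f, i', j', hf', Or.inr (Or.inl rfl)⟩, by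
          rw [h]; simp [a₂, b₂, extZero_single i₂]⟩
      · exact ⟨_, ⟨f, i', j', hf', Or.inr (Or.inr rfl)⟩, by
          rw [h]; simp [a₂, n₂, extZero_single i₂]⟩
  · rintro x (⟨_, ⟨f, i, j, hf, h⟩, rfl⟩ | ⟨_, ⟨f, i, j, hf, h⟩, rfl⟩)
    · refine ⟨Sum.inl f, φ₁ i, φ₁ j, by simp [oneSumEnds, hf], ?_⟩
      rcases h with rfl | rfl | rfl
      · left; simp [a₁, b₁, extZero_single i₁]
      · right; left; simp [a₁, b₁, extZero_single i₁]
      · right; right; simp [a₁, n₁, extZero_single i₁]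
    · refine ⟨Sum.inr f, φ₂ i, φ₂ j, by simp [oneSumEnds, hf], ?_⟩
      rcases h with rfl | rfl | rfl
      · left; simp [a₂, b₂, extZero_single i₂]
      · right; left; simp [a₂, b₂, extZero_single i₂]
      · right; right; simp [a₂, n₂, extZero_single i₂]

/-- Let `G = G₁ ⊕ G₂` be a `1`-sum of graphs `G₁` and `G₂` (obtained from the
disjoint union by identifying the vertex `v` of `G₁` with the vertex `w` of `G₂`).  Then
`h*(C_G; z) = h*(C_{G₁}; z) · h*(C_{G₂}; z)`. -/
theorem hstar_of_one_sum
    {V₁ E₁ V₂ E₂ W : Type*}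
    [Fintype V₁] [Fintype E₁] [DecidableEq V₁] [DecidableEq E₁]
    [Fintype V₂] [Fintype E₂] [DecidableEq V₂] [DecidableEq E₂]
    [Fintype W] [DecidableEq W]
    (ends₁ : E₁ → Sym2 V₁) (ends₂ : E₂ → Sym2 V₂)
    (hiso₁ : ∀ v : V₁, ∃ f : E₁, v ∈ ends₁ f)
    (hiso₂ : ∀ v : V₂, ∃ f : E₂, v ∈ ends₂ f)
    (v : V₁) (w : V₂) (φ₁ : V₁ → W) (φ₂ : V₂ → W)
    (hφ₁ : Function.Injective φ₁) (hφ₂ : Function.Injective φ₂)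
    (hvw : φ₁ v = φ₂ w)
    (hcover : Set.range φ₁ ∪ Set.range φ₂ = Set.univ)
    (hmeet : Set.range φ₁ ∩ Set.range φ₂ = {φ₁ v})
    (h₁ h₂ H : Polynomial ℚ)
    (hh₁ : IsHStarPoly (cosmoPolytope ends₁)
      (Fintype.card V₁ + Fintype.card E₁ - 1) h₁)
    (hh₂ : IsHStarPoly (cosmoPolytope ends₂)
      (Fintype.card V₂ + Fintype.card E₂ - 1) h₂)
    (hH : IsHStarPoly (cosmoPolytope (oneSumEnds ends₁ ends₂ φ₁ φ₂))
      (Fintype.card W + Fintype.card (E₁ ⊕ E₂) - 1) H) :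
    H = h₁ * h₂ := by
  classical
  have i₁ : Function.Injective (Sum.map φ₁ (Sum.inl : E₁ → E₁ ⊕ E₂)) :=
    hφ₁.sumMap Sum.inl_injective
  have i₂ : Function.Injective (Sum.map φ₂ (Sum.inr : E₂ → E₁ ⊕ E₂)) :=
    hφ₂.sumMap Sum.inr_injective
  have hm : ∀ a b, φ₁ a = φ₂ b → a = v ∧ b = w := by
    intro a b hab
    have : φ₁ a ∈ Set.range φ₁ ∩ Set.range φ₂ := ⟨⟨a, rfl⟩, ⟨b, hab.symm⟩⟩
    rw [hmeet] at this
    have h1 : φ₁ a = φ₁ v := this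
    exact ⟨hφ₁ h1, hφ₂ (by rw [← hab, h1, hvw])⟩
  have hc : ∀ k, (∃ i, φ₁ i = k) ∨ (∃ j, φ₂ j = k) := by
    intro k
    have : k ∈ Set.range φ₁ ∪ Set.range φ₂ := by rw [hcover]; trivial
    exact this
  have main := ehrhart_glue (cosmoVertices ends₁) (cosmoVertices ends₂)
    (cosmoPolytope (oneSumEnds ends₁ ends₂ φ₁ φ₂)) _ _ i₁ i₂ (Sum.inl v) (Sum.inl w)
    (by simp [hvw])
    (by
      rintro (i | i) (j | j) h <;> simp at h
      simpa using hm i j h)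
    (by
      rintro (k | k | k)
      · rcases hc k with ⟨i, rfl⟩ | ⟨i, rfl⟩
        · exact Or.inl ⟨Sum.inl i, rfl⟩
        · exact Or.inr ⟨Sum.inl i, rfl⟩
      · exact Or.inl ⟨Sum.inr k, rfl⟩
      · exact Or.inr ⟨Sum.inr k, rfl⟩)
    (by rw [cosmoPolytope, cosmoVertices_oneSum _ _ _ _ hφ₁ hφ₂])
    (cosmo_sum _) (cosmo_sum _) (cosmo_sum _) 3 (cosmo_bound _) (cosmo_bound _) (cosmo_bound _)
    (single_mem_cosmo _ hiso₁ v) (single_mem_cosmo _ hiso₂ w)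
    (cosmo_floor ends₂ hiso₂ w)
  -- cardinality of the glued vertex set
  have hcard : Fintype.card W + 1 = Fintype.card V₁ + Fintype.card V₂ := by
    have h1 := Finset.card_union_add_card_inter (Finset.univ.image φ₁) (Finset.univ.image φ₂)
    rw [Finset.card_image_of_injective _ hφ₁, Finset.card_image_of_injective _ hφ₂] at h1
    have hu : Finset.univ.image φ₁ ∪ Finset.univ.image φ₂ = Finset.univ := by
      ext k; simpa using hc k
    have hi : Finset.univ.image φ₁ ∩ Finset.univ.image φ₂ = {φ₁ v} := by
      ext k
      have : k ∈ Set.range φ₁ ∩ Set.range φ₂ ↔ k ∈ ({φ₁ v} : Set W) := by rw [hmeet]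
      simpa using this
    rw [hu, hi] at h1
    simpa using h1
  have p₁ : 0 < Fintype.card V₁ := Fintype.card_pos_iff.mpr ⟨v⟩
  have p₂ : 0 < Fintype.card V₂ := Fintype.card_pos_iff.mpr ⟨w⟩
  have pW : 0 < Fintype.card W := Fintype.card_pos_iff.mpr ⟨φ₁ v⟩
  unfold IsHStarPoly at hh₁ hh₂ hH
  apply Polynomial.coe_injective ℚ
  rw [Polynomial.coe_mul, ← hh₁, ← hh₂, ← hH, main]
  rw [Fintype.card_sum]
  have e : Fintype.card V₁ + Fintype.card E₁ - 1 + 1 + (Fintype.card V₂ + Fintype.card E₂ - 1 + 1)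
      = Fintype.card W + (Fintype.card E₁ + Fintype.card E₂) - 1 + 1 + 1 := by omega
  have e' : ((1 : PowerSeries ℚ) - PowerSeries.X) ^ (Fintype.card V₁ + Fintype.card E₁ - 1 + 1) *
      (1 - PowerSeries.X) ^ (Fintype.card V₂ + Fintype.card E₂ - 1 + 1) =
      (1 - PowerSeries.X) ^ (Fintype.card W + (Fintype.card E₁ + Fintype.card E₂) - 1 + 1) *
        (1 - PowerSeries.X) := by
    rw [← pow_add, e, pow_succ]
  simp only [cosmoPolytope]
  linear_combination (-ehrhartSeries (convexHull ℝ (cosmoVertices ends₁)) *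
    ehrhartSeries (convexHull ℝ (cosmoVertices ends₂))) * e'
end

section
/- Let T_m be a tree with m edges. Then the normalized volume of its cosmological polytope is Vol(C_{T_m}) = 4^m. -/
open Polynomial Pointwise

namespace CosmoTree

open scoped NNReal

section gen
variable {V E : Type*} [DecidableEq V] [DecidableEq E]

/-- The three generators attached to the edge `f = uv`. -/
def tri (u v : V) (f : E) : Set ((V ⊕ E) → ℝ) :=
  {Pi.single (Sum.inl u) 1 + Pi.single (Sum.inl v) 1 - Pi.single (Sum.inr f) 1,
   Pi.single (Sum.inl u) 1 - Pi.single (Sum.inl v) 1 + Pi.single (Sum.inr f) 1,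
   -Pi.single (Sum.inl u) 1 + Pi.single (Sum.inl v) 1 + Pi.single (Sum.inr f) 1}

lemma tri_comm (u v : V) (f : E) : tri u v f = tri v u f := by
  ext x
  simp only [tri, Set.mem_insert_iff, Set.mem_singleton_iff]
  rw [add_comm (Pi.single (Sum.inl v) (1 : ℝ) : (V ⊕ E) → ℝ) (Pi.single (Sum.inl u) (1 : ℝ)),
    neg_add_eq_sub, neg_add_eq_sub]
  tauto

def gens (ends : E → Sym2 V) (F : Finset E) : Set ((V ⊕ E) → ℝ) :=
  {x | ∃ f ∈ F, ∃ i j, ends f = s(i, j) ∧ x ∈ tri i j f}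

/-- Cone spanned by a root ray and the generators of the edges in `F`. -/
noncomputable def K (ends : E → Sym2 V) (r : V) (F : Finset E) :
    Submodule ℝ≥0 ((V ⊕ E) → ℝ) :=
  Submodule.span ℝ≥0 ({Pi.single (Sum.inl r) 1} ∪ gens ends F)

lemma K_insert (ends : E → Sym2 V) (r : V) (F : Finset E) (f : E) (v l : V)
    (hf : ends f = s(v, l)) :
    K ends r (insert f F) = K ends r F ⊔ Submodule.span ℝ≥0 (tri v l f) := by
  rw [K, K, ← Submodule.span_union]
  congr 1
  rw [Set.union_assoc]
  congr 1
  ext x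
  simp only [gens, Set.mem_union, Set.mem_ofPred_eq, Finset.mem_insert]
  constructor
  · rintro ⟨g, rfl | hg, i, j, h1, h2⟩
    · right
      rw [hf, Sym2.eq_iff] at h1
      rcases h1 with ⟨rfl, rfl⟩ | ⟨rfl, rfl⟩
      · exact h2
      · rwa [tri_comm]
    · exact Or.inl ⟨g, hg, i, j, h1, h2⟩
  · rintro (⟨g, hg, i, j, h1, h2⟩ | h)
    · exact ⟨g, Or.inr hg, i, j, h1, h2⟩
    · exact ⟨f, Or.inl rfl, v, l, hf, h⟩

inductive Build (ends : E → Sym2 V) (r : V) : Finset V → Finset E → Prop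
  | base : Build ends r {r} ∅
  | step (S : Finset V) (F : Finset E) (v l : V) (f : E) (h : Build ends r S F)
      (hv : v ∈ S) (hl : l ∉ S) (hfF : f ∉ F) (hf : ends f = s(v, l)) :
      Build ends r (insert l S) (insert f F)

/-- The displacement of a lattice point when a leaf is added. -/
def shift {R : Type*} [Ring R] [LinearOrder R] (v l : V) (f : E) (p q : R) : (V ⊕ E) → R :=
  Pi.single (Sum.inl l) p + Pi.single (Sum.inr f) q - Pi.single (Sum.inl v) (min p q)

lemma smul_mem_K {M : Submodule ℝ≥0 ((V ⊕ E) → ℝ)} {x : (V ⊕ E) → ℝ} (hx : x ∈ M)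
    (a : ℝ) (ha : 0 ≤ a) : a • x ∈ M := by
  have := M.smul_mem ⟨a, ha⟩ hx
  exact this

lemma single_mem_tri (u v : V) (f : E) :
    Pi.single (Sum.inl u) (1 : ℝ) ∈ Submodule.span ℝ≥0 (tri u v f) := by
  have h1 : Pi.single (Sum.inl u) 1 + Pi.single (Sum.inl v) 1 - Pi.single (Sum.inr f) 1 ∈
    Submodule.span ℝ≥0 (tri u v f) := Submodule.subset_span (by simp [tri])
  have h2 : Pi.single (Sum.inl u) 1 - Pi.single (Sum.inl v) 1 + Pi.single (Sum.inr f) 1 ∈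
    Submodule.span ℝ≥0 (tri u v f) := Submodule.subset_span (by simp [tri])
  have h3 := smul_mem_K (add_mem h1 h2) (1/2) (by norm_num)
  convert h3 using 1
  module

lemma Build.supp {ends : E → Sym2 V} {r : V} {S : Finset V} {F : Finset E}
    (h : Build ends r S F) :
    (∀ x ∈ K ends r F, (∀ v ∉ S, x (Sum.inl v) = 0) ∧ (∀ f ∉ F, x (Sum.inr f) = 0)) ∧
    (∀ v ∈ S, Pi.single (Sum.inl v) (1 : ℝ) ∈ K ends r F) := by
  have hends : r ∈ S ∧ ∀ f ∈ F, ∀ i j, ends f = s(i, j) → i ∈ S ∧ j ∈ S := by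
    induction h with
    | base => simp
    | step S F v l f h hv hl hfF hf ih =>
      refine ⟨by simp [ih.1], ?_⟩
      intro g hg i j hij
      rcases Finset.mem_insert.1 hg with rfl | hg
      · rw [hf, Sym2.eq_iff] at hij
        rcases hij with ⟨rfl, rfl⟩ | ⟨rfl, rfl⟩ <;> simp [hv]
      · have := ih.2 g hg i j hij
        simp [this]
  constructor
  · intro x hx
    rw [K] at hx
    induction hx using Submodule.span_induction with
    | zero => simp
    | add x y _ _ hx hy =>
      exact ⟨fun v hv => by simp [hx.1 v hv, hy.1 v hv],
        fun v hv => by simp [hx.2 v hv, hy.2 v hv]⟩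
    | smul a x _ hx =>
      exact ⟨fun v hv => by simp [hx.1 v hv], fun v hv => by simp [hx.2 v hv]⟩
    | mem x hx =>
      rcases hx with hx | ⟨f, hf, i, j, hij, hx⟩
      · rw [Set.mem_singleton_iff] at hx
        subst hx
        refine ⟨fun v hv => ?_, fun g hg => by simp⟩
        have : v ≠ r := fun h => hv (h ▸ hends.1)
        simp [Pi.single_apply, this]
      · have h2 := hends.2 f hf i j hij
        simp only [tri, Set.mem_insert_iff, Set.mem_singleton_iff] at hx
        constructor
        · intro v hv
          have a : v ≠ i := fun h => hv (h ▸ h2.1)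
          have b : v ≠ j := fun h => hv (h ▸ h2.2)
          rcases hx with rfl | rfl | rfl <;> simp [Pi.single_apply, a, b]
        · intro g hg
          have a : g ≠ f := fun h => hg (h ▸ hf)
          rcases hx with rfl | rfl | rfl <;> simp [Pi.single_apply, a]
  · clear hends
    induction h with
    | base =>
      intro v hv
      rw [Finset.mem_singleton] at hv
      subst hv
      exact Submodule.subset_span (by simp)
    | step S F v l f h hv hl hfF hf ih =>
      intro w hw
      rw [K_insert ends r F f v l hf]
      rcases Finset.mem_insert.1 hw with rfl | hw
      · refine Submodule.mem_sup_right ?_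
        rw [tri_comm]
        exact single_mem_tri _ _ _
      · exact Submodule.mem_sup_left (ih w hw)

lemma Build.ends_mem {ends : E → Sym2 V} {r : V} {S : Finset V} {F : Finset E}
    (h : Build ends r S F) : r ∈ S ∧ F.card + 1 = S.card ∧
      ∀ f ∈ F, ∀ i j, ends f = s(i, j) → i ∈ S ∧ j ∈ S := by
  induction h with
  | base => simp
  | step S F v l f h hv hl hfF hf ih =>
    refine ⟨by simp [ih.1], by simp [hl, hfF, ih.2.1], ?_⟩
    intro g hg i j hij
    rcases Finset.mem_insert.1 hg with rfl | hg
    · rw [hf, Sym2.eq_iff] at hij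
      rcases hij with ⟨rfl, rfl⟩ | ⟨rfl, rfl⟩ <;> simp [hv]
    · have := ih.2.2 g hg i j hij
      simp [this]

lemma mem_step {ends : E → Sym2 V} {r : V} {S : Finset V} {F : Finset E}
    (h : Build ends r S F) {v l : V} {f : E} (hf : ends f = s(v, l))
    (y : (V ⊕ E) → ℝ) (hy : y ∈ K ends r F) (p q : ℝ) (hpq : 0 ≤ p + q) :
    y + shift v l f p q ∈ K ends r (insert f F) := by
  rw [K_insert ends r F f v l hf]
  refine add_mem (Submodule.mem_sup_left hy) (Submodule.mem_sup_right ?_)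
  have h1 : Pi.single (Sum.inl v) 1 + Pi.single (Sum.inl l) 1 - Pi.single (Sum.inr f) 1 ∈
    Submodule.span ℝ≥0 (tri v l f) := Submodule.subset_span (by simp [tri])
  have h2 : Pi.single (Sum.inl v) 1 - Pi.single (Sum.inl l) 1 + Pi.single (Sum.inr f) 1 ∈
    Submodule.span ℝ≥0 (tri v l f) := Submodule.subset_span (by simp [tri])
  have h3 : -Pi.single (Sum.inl v) 1 + Pi.single (Sum.inl l) 1 + Pi.single (Sum.inr f) 1 ∈
    Submodule.span ℝ≥0 (tri v l f) := Submodule.subset_span (by simp [tri])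
  have key : ∀ (w : V ⊕ E) (a : ℝ), (Pi.single w a : (V ⊕ E) → ℝ) = a • Pi.single w 1 := by
    intro w a
    rw [← Pi.single_smul]; simp
  rw [shift, key _ p, key _ q, key _ (min p q)]
  rcases le_total p q with hle | hle
  · rw [min_eq_left hle]
    have := add_mem (smul_mem_K h2 ((q - p) / 2) (by linarith))
      (smul_mem_K h3 ((p + q) / 2) (by linarith))
    convert this using 1
    module
  · rw [min_eq_right hle]
    have := add_mem (smul_mem_K h1 ((p - q) / 2) (by linarith))
      (smul_mem_K h3 ((p + q) / 2) (by linarith))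
    convert this using 1
    module

lemma of_mem_step {ends : E → Sym2 V} {r : V} {S : Finset V} {F : Finset E}
    (h : Build ends r S F) {v l : V} {f : E} (hv : v ∈ S) (hl : l ∉ S) (hfF : f ∉ F)
    (hf : ends f = s(v, l))
    (x : (V ⊕ E) → ℝ) (hx : x ∈ K ends r (insert f F)) :
    0 ≤ x (Sum.inl l) + x (Sum.inr f) ∧
    x - shift v l f (x (Sum.inl l)) (x (Sum.inr f)) ∈ K ends r F := by
  rw [K_insert ends r F f v l hf, Submodule.mem_sup] at hx
  obtain ⟨y, hy, z, hz, rfl⟩ := hx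
  rw [tri, Submodule.mem_span_triple] at hz
  obtain ⟨a, b, c, rfl⟩ := hz
  have hvl : v ≠ l := fun h => hl (h ▸ hv)
  obtain ⟨hs, he⟩ := h.supp
  have yl := (hs y hy).1 l hl
  have yf := (hs y hy).2 f hfF
  have ev := he v hv
  have el : (y + (a • (Pi.single (Sum.inl v) 1 + Pi.single (Sum.inl l) 1 -
      Pi.single (Sum.inr f) 1) + b • (Pi.single (Sum.inl v) 1 - Pi.single (Sum.inl l) 1 +
      Pi.single (Sum.inr f) 1) + c • (-Pi.single (Sum.inl v) 1 + Pi.single (Sum.inl l) 1 +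
      Pi.single (Sum.inr f) 1)) : (V ⊕ E) → ℝ) (Sum.inl l) = (a : ℝ) - b + c := by
    simp [Pi.single_apply, hvl.symm, yl, NNReal.smul_def]
    ring
  have ef : (y + (a • (Pi.single (Sum.inl v) 1 + Pi.single (Sum.inl l) 1 -
      Pi.single (Sum.inr f) 1) + b • (Pi.single (Sum.inl v) 1 - Pi.single (Sum.inl l) 1 +
      Pi.single (Sum.inr f) 1) + c • (-Pi.single (Sum.inl v) 1 + Pi.single (Sum.inl l) 1 +
      Pi.single (Sum.inr f) 1)) : (V ⊕ E) → ℝ) (Sum.inr f) = -(a : ℝ) + b + c := by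
    simp [Pi.single_apply, yf, NNReal.smul_def]
  rw [el, ef]
  have ha := a.2
  have hb := b.2
  have hc := c.2
  simp only [NNReal.val_eq_coe] at ha hb hc
  refine ⟨by linarith, ?_⟩
  have key : ∀ (w : V ⊕ E) (a : ℝ), (Pi.single w a : (V ⊕ E) → ℝ) = a • Pi.single w 1 := by
    intro w a
    rw [← Pi.single_smul]; simp
  simp only [NNReal.smul_def]
  rw [shift, key _ ((a : ℝ) - b + c), key _ (-(a : ℝ) + b + c), key _ (min _ _)]
  rcases le_total (a : ℝ) b with hle | hle
  · rw [min_eq_left (by linarith)]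
    have := add_mem hy (smul_mem_K ev (2 * a) (by linarith))
    convert this using 1
    module
  · rw [min_eq_right (by linarith)]
    have := add_mem hy (smul_mem_K ev (2 * b) (by linarith))
    convert this using 1
    module

/-- Integer pairs `(p, q)` with `p + q ≥ 0` and `max p q = k`. -/
noncomputable def pairs (k : ℕ) : Finset (ℤ × ℤ) :=
  ({(k : ℤ)} ×ˢ Finset.Icc (-(k : ℤ)) k) ∪ (Finset.Ico (-(k : ℤ)) k ×ˢ {(k : ℤ)})

lemma mem_pairs (k : ℕ) (p q : ℤ) : (p, q) ∈ pairs k ↔ 0 ≤ p + q ∧ max p q = k := by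
  simp only [pairs, Finset.mem_union, Finset.mem_product, Finset.mem_singleton, Finset.mem_Icc,
    Finset.mem_Ico]
  omega

lemma card_pairs (k : ℕ) : (pairs k).card = 4 * k + 1 := by
  rw [pairs, Finset.card_union_of_disjoint]
  · simp; omega
  · rw [Finset.disjoint_left]
    rintro ⟨p, q⟩
    simp only [Finset.mem_product, Finset.mem_singleton, Finset.mem_Icc, Finset.mem_Ico]
    omega

lemma series_pairs : (PowerSeries.mk fun k => (4 * k + 1 : ℚ)) * (1 - PowerSeries.X) ^ 2
    = 1 + 3 * PowerSeries.X := by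
  have e : (1 + 3 * PowerSeries.X : PowerSeries ℚ) =
      PowerSeries.mk (fun k => if k = 0 then 1 else if k = 1 then 3 else 0) := by
    have h3 : (3 : PowerSeries ℚ) = PowerSeries.C 3 := (map_ofNat (PowerSeries.C (R := ℚ)) 3).symm
    ext n
    rw [h3]
    rcases n with _ | _ | n <;> simp [PowerSeries.coeff_one, PowerSeries.coeff_X]
  have e1 : (PowerSeries.mk fun k => (4 * k + 1 : ℚ)) * (1 - PowerSeries.X) =
      PowerSeries.mk (fun k => if k = 0 then 1 else 4) := by
    ext n
    rw [mul_sub, mul_one]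
    rcases n with _ | n
    · simp
    · simp [PowerSeries.coeff_succ_mul_X]
      ring
  rw [pow_two, ← mul_assoc, e1, e]
  ext n
  rw [mul_sub, mul_one]
  rcases n with _ | _ | n
  · simp
  · simp [PowerSeries.coeff_succ_mul_X]; norm_num
  · simp [PowerSeries.coeff_succ_mul_X]

variable [Fintype V] [Fintype E]

lemma cast_shift (v l : V) (f : E) (p q : ℤ) :
    (fun k => ((shift v l f p q k : ℤ) : ℝ)) = shift v l f (p : ℝ) (q : ℝ) := by
  ext k
  simp [shift, Pi.single_apply]

lemma sum_shift (v l : V) (f : E) (p q : ℤ) :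
    ∑ k, shift v l f p q k = max p q := by
  simp [shift, Finset.sum_add_distrib, Finset.sum_sub_distrib, -Fintype.sum_sum_type]
  omega

lemma sum_nonneg_K (ends : E → Sym2 V) (r : V) (F : Finset E) (x : (V ⊕ E) → ℝ)
    (hx : x ∈ K ends r F) : 0 ≤ ∑ k, x k := by
  rw [K] at hx
  induction hx using Submodule.span_induction with
  | zero => simp
  | add x y _ _ hx hy =>
    simp only [Pi.add_apply, Finset.sum_add_distrib]
    exact add_nonneg hx hy
  | smul a x _ hx =>
    simp only [Pi.smul_apply, ← Finset.smul_sum]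
    exact smul_nonneg a.2 hx
  | mem x hx =>
    rcases hx with hx | ⟨f, hf, i, j, hij, hx⟩
    · rw [Set.mem_singleton_iff] at hx
      subst hx
      simp [-Fintype.sum_sum_type]
    · simp only [tri, Set.mem_insert_iff, Set.mem_singleton_iff] at hx
      rcases hx with rfl | rfl | rfl <;>
        simp [-Fintype.sum_sum_type, Finset.sum_add_distrib, Finset.sum_sub_distrib]

lemma Build.count {ends : E → Sym2 V} {r : V} {S : Finset V} {F : Finset E}
    (h : Build ends r S F) :
    ∃ B : ℕ → Finset ((V ⊕ E) → ℤ),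
      (∀ t x, x ∈ B t ↔ ((fun k => (x k : ℝ)) ∈ K ends r F ∧ ∑ k, x k = t)) ∧
      (PowerSeries.mk fun t => ((B t).card : ℚ)) * (1 - PowerSeries.X) ^ (2 * F.card + 1) =
        (1 + 3 * PowerSeries.X) ^ F.card := by
  induction h with
  | base =>
    refine ⟨fun t => {Pi.single (Sum.inl r) (t : ℤ)}, ?_, ?_⟩
    · intro t x
      have hK : K ends r ∅ = Submodule.span ℝ≥0 {Pi.single (Sum.inl r) 1} := by
        simp [K, gens]
      rw [hK, Finset.mem_singleton, Submodule.mem_span_singleton]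
      constructor
      · rintro rfl
        refine ⟨⟨(t : ℝ≥0), ?_⟩, ?_⟩
        · ext k
          simp [Pi.single_apply, NNReal.smul_def]
        · simp [-Fintype.sum_sum_type]
      · rintro ⟨⟨a, ha⟩, hs⟩
        have h0 : ∀ k, k ≠ Sum.inl r → x k = 0 := by
          intro k hk
          have := congrFun ha k
          simp [Pi.single_apply, hk] at this
          exact_mod_cast this.symm
        rw [Finset.sum_eq_single (Sum.inl r) (fun k _ hk => h0 k hk) (by simp)] at hs
        ext k
        by_cases hk : k = Sum.inl r
        · subst hk; simp [hs]
        · simp [Pi.single_apply, hk, h0 k hk]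
    · simp only [Finset.card_singleton, Nat.cast_one, Finset.card_empty, mul_zero, zero_add,
        pow_one, pow_zero]
      exact PowerSeries.mk_one_mul_one_sub_eq_one ℚ
  | step S F v l f h hv hl hfF hf ih =>
    obtain ⟨B, hB, hser⟩ := ih
    have hsupp : ∀ t, ∀ x ∈ B t, x (Sum.inl l) = 0 ∧ x (Sum.inr f) = 0 := by
      intro t x hx
      have := h.supp.1 _ ((hB t x).1 hx).1
      have h1 := this.1 l hl
      have h2 := this.2 f hfF
      exact ⟨by exact_mod_cast h1, by exact_mod_cast h2⟩
    have hvl : v ≠ l := fun h => hl (h ▸ hv)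
    have shl : ∀ p q : ℤ, shift v l f p q (Sum.inl l) = p := by
      intro p q; simp [shift, Pi.single_apply, hvl.symm]
    have shf : ∀ p q : ℤ, shift v l f p q (Sum.inr f) = q := by
      intro p q; simp [shift, Pi.single_apply]
    let D : ℕ → Finset (Σ _ : ℕ × ℕ, ((V ⊕ E) → ℤ) × (ℤ × ℤ)) := fun t =>
      (Finset.HasAntidiagonal.antidiagonal t).sigma (fun k => B k.1 ×ˢ pairs k.2)
    let φ : (Σ _ : ℕ × ℕ, ((V ⊕ E) → ℤ) × (ℤ × ℤ)) → ((V ⊕ E) → ℤ) := fun d =>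
      d.2.1 + shift v l f d.2.2.1 d.2.2.2
    have hinj : ∀ t, Set.InjOn φ (D t) := by
      rintro t ⟨⟨i, j⟩, x, p, q⟩ hx ⟨⟨i', j'⟩, x', p', q'⟩ hx' heq
      simp only [D, Finset.coe_sigma, Set.mem_sigma_iff, Finset.mem_coe, Finset.mem_product,
        Finset.HasAntidiagonal.mem_antidiagonal, mem_pairs] at hx hx'
      simp only [φ] at heq
      obtain ⟨a1, a2, a3, a4⟩ := hx
      obtain ⟨b1, b2, b3, b4⟩ := hx'
      have c1 := hsupp _ _ a2
      have c2 := hsupp _ _ b2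
      have e1 := congrFun heq (Sum.inl l)
      have e2 := congrFun heq (Sum.inr f)
      simp only [Pi.add_apply, shl, shf, c1.1, c2.1, c1.2, c2.2, zero_add] at e1 e2
      subst e1 e2
      have e3 : j = j' := by omega
      have e4 : i = i' := by omega
      have e5 : x = x' := add_right_cancel heq
      subst e3 e4 e5
      rfl
    refine ⟨fun t => (D t).image φ, ?_, ?_⟩
    · intro t x
      rw [Finset.mem_image]
      constructor
      · rintro ⟨⟨⟨i, j⟩, x, p, q⟩, hx, rfl⟩
        simp only [D, Finset.mem_sigma, Finset.mem_product,
          Finset.HasAntidiagonal.mem_antidiagonal, mem_pairs] at hx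
        obtain ⟨a1, a2, a3, a4⟩ := hx
        obtain ⟨c1, c2⟩ := (hB _ _).1 a2
        constructor
        · have := mem_step h hf _ c1 p q (by exact_mod_cast a3)
          rw [← cast_shift] at this
          convert this using 1
          ext k
          simp [φ]
        · simp only [φ, Pi.add_apply, Finset.sum_add_distrib, c2, sum_shift, a4]
          exact_mod_cast a1
      · rintro ⟨hx, hs⟩
        obtain ⟨c1, c2⟩ := of_mem_step h hv hl hfF hf _ hx
        rw [← cast_shift] at c2
        set p := x (Sum.inl l) with hp
        set q := x (Sum.inr f) with hq
        have c1' : 0 ≤ p + q := by exact_mod_cast c1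
        have c3 : (fun k => (((x - shift v l f p q) k : ℤ) : ℝ)) ∈ K ends r F := by
          convert c2 using 1
          ext k
          simp
        have c4 : ∑ k, (x - shift v l f p q) k = t - max p q := by
          simp only [Pi.sub_apply, Finset.sum_sub_distrib, sum_shift, hs]
        have c5 : 0 ≤ ∑ k, (x - shift v l f p q) k := by
          have := sum_nonneg_K _ _ _ _ c3
          exact_mod_cast this
        obtain ⟨j, hj⟩ := Int.eq_ofNat_of_zero_le (show 0 ≤ max p q by omega)
        obtain ⟨i, hi⟩ := Int.eq_ofNat_of_zero_le c5
        refine ⟨⟨(i, j), x - shift v l f p q, p, q⟩, ?_, ?_⟩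
        · simp only [D, Finset.mem_sigma, Finset.mem_product,
            Finset.HasAntidiagonal.mem_antidiagonal, mem_pairs]
          refine ⟨by omega, (hB _ _).2 ⟨c3, hi⟩, c1', hj⟩
        · simp [φ]
    · have hcard : ∀ t, (((D t).image φ).card : ℚ) =
          ∑ k ∈ Finset.HasAntidiagonal.antidiagonal t, ((B k.1).card : ℚ) * (4 * k.2 + 1) := by
        intro t
        rw [Finset.card_image_of_injOn (hinj t), Finset.card_sigma]
        push_cast
        refine Finset.sum_congr rfl fun k _ => ?_
        rw [Finset.card_product, card_pairs]
        push_cast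
        ring
      have : (PowerSeries.mk fun t => (((D t).image φ).card : ℚ)) =
          (PowerSeries.mk fun t => ((B t).card : ℚ)) *
            (PowerSeries.mk fun k => (4 * k + 1 : ℚ)) := by
        ext t
        rw [PowerSeries.coeff_mk, hcard, PowerSeries.coeff_mul]
        simp only [PowerSeries.coeff_mk]
      rw [this, Finset.card_insert_of_notMem hfF, pow_succ (1 + 3 * PowerSeries.X), ← hser,
        ← series_pairs]
      ring

lemma exists_build {ends : E → Sym2 V} (r : V)
    (hconn : ∀ S : Finset V, r ∈ S → S ≠ Finset.univ →
      ∃ v ∈ S, ∃ l ∉ S, ∃ f, ends f = s(v, l))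
    (hcard : Fintype.card E + 1 = Fintype.card V) :
    Build ends r Finset.univ Finset.univ := by
  have key : ∀ n, n + 1 ≤ Fintype.card V → ∃ S F, Build ends r S F ∧ S.card = n + 1 := by
    intro n
    induction n with
    | zero => exact fun _ => ⟨_, _, Build.base, by simp⟩
    | succ n ih =>
      intro hn
      obtain ⟨S, F, hb, hS⟩ := ih (by omega)
      have hm := hb.ends_mem
      obtain ⟨v, hv, l, hl, f, hf⟩ := hconn S hm.1 (by
        rintro rfl
        rw [Finset.card_univ] at hS
        omega)
      refine ⟨_, _, Build.step S F v l f hb hv hl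
        (fun hfF => hl (hm.2.2 f hfF v l hf).2) hf, by simp [hl, hS]⟩
  obtain ⟨S, F, hb, hS⟩ := key (Fintype.card E) hcard.le
  have hm := hb.ends_mem
  have h1 : S = Finset.univ := by
    rw [← Finset.card_eq_iff_eq_univ]; omega
  have h2 : F = Finset.univ := by
    rw [← Finset.card_eq_iff_eq_univ]; omega
  rw [← h1]
  rw [h1] at hb ⊢
  rw [h2] at hb
  exact hb

lemma cosmo_eq_gens (ends : E → Sym2 V) : cosmoVertices ends = gens ends Finset.univ := by
  ext x
  simp [cosmoVertices, gens, tri]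

lemma sum_cosmo (ends : E → Sym2 V) (x : (V ⊕ E) → ℝ) (hx : x ∈ cosmoPolytope ends) :
    x ∈ Submodule.span ℝ≥0 (cosmoVertices ends) ∧ ∑ k, x k = 1 := by
  have hc : Convex ℝ {x : (V ⊕ E) → ℝ | x ∈ Submodule.span ℝ≥0 (cosmoVertices ends) ∧
      ∑ k, x k = 1} := by
    rintro x ⟨hx, hx1⟩ y ⟨hy, hy1⟩ a b ha hb hab
    refine ⟨add_mem (smul_mem_K hx a ha) (smul_mem_K hy b hb), ?_⟩
    simp only [Pi.add_apply, Pi.smul_apply, Finset.sum_add_distrib, ← Finset.smul_sum, hx1, hy1]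
    simpa using hab
  refine convexHull_min ?_ hc hx
  intro y hy
  refine ⟨Submodule.subset_span hy, ?_⟩
  obtain ⟨f, i, j, -, rfl | rfl | rfl⟩ := hy <;>
    simp [-Fintype.sum_sum_type, Finset.sum_add_distrib, Finset.sum_sub_distrib]

lemma mem_smul_cosmo (ends : E → Sym2 V) (x : (V ⊕ E) → ℝ) (t : ℕ) (ht : t ≠ 0) :
    x ∈ (t : ℝ) • cosmoPolytope ends ↔
      x ∈ Submodule.span ℝ≥0 (cosmoVertices ends) ∧ ∑ k, x k = t := by
  constructor
  · rintro ⟨y, hy, rfl⟩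
    obtain ⟨h1, h2⟩ := sum_cosmo ends y hy
    refine ⟨smul_mem_K h1 t (by positivity), ?_⟩
    simp only [Pi.smul_apply, ← Finset.smul_sum, h2]
    simp
  · rintro ⟨hx, hs⟩
    have key : x = 0 ∨ ∃ c : ℝ, 0 < c ∧ ∃ y ∈ cosmoPolytope ends, x = c • y := by
      clear hs
      induction hx using Submodule.span_induction with
      | zero => exact Or.inl rfl
      | mem x hx => exact Or.inr ⟨1, one_pos, x, subset_convexHull ℝ _ hx, by simp⟩
      | smul a x _ hx =>
        rcases hx with rfl | ⟨c, hc, y, hy, rfl⟩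
        · left; simp
        · rcases eq_or_ne a 0 with rfl | ha
          · left; simp
          · right
            refine ⟨a * c, by positivity, y, hy, ?_⟩
            rw [NNReal.smul_def, smul_smul]
      | add x y _ _ hx hy =>
        rcases hx with rfl | ⟨c, hc, x, hx, rfl⟩
        · simpa using hy
        · rcases hy with rfl | ⟨d, hd, y, hy, rfl⟩
          · exact Or.inr ⟨c, hc, x, hx, by simp⟩
          · right
            refine ⟨c + d, by positivity, (c / (c + d)) • x + (d / (c + d)) • y, ?_, ?_⟩
            · exact (convex_convexHull ℝ _) hx hy (by positivity) (by positivity)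
                (by field_simp)
            · rw [smul_add, smul_smul, smul_smul]
              congr 2 <;> field_simp
    rcases key with rfl | ⟨c, hc, y, hy, rfl⟩
    · simp at hs
      exact absurd (by exact_mod_cast hs.symm) ht
    · have h2 := (sum_cosmo ends y hy).2
      simp only [Pi.smul_apply, ← Finset.smul_sum, h2] at hs
      simp at hs
      rw [hs]
      exact Set.smul_mem_smul_set hy

lemma K_univ (ends : E → Sym2 V) (r : V) (f : E) (u : V) (hf : ends f = s(r, u)) :
    K ends r Finset.univ = Submodule.span ℝ≥0 (cosmoVertices ends) := by
  rw [cosmo_eq_gens, K]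
  refine le_antisymm (Submodule.span_le.2 ?_) (Submodule.span_mono Set.subset_union_right)
  rintro x (hx | hx)
  · rw [Set.mem_singleton_iff] at hx
    subst hx
    refine Submodule.span_mono ?_ (single_mem_tri r u f)
    intro y hy
    exact ⟨f, Finset.mem_univ _, r, u, hf, hy⟩
  · exact Submodule.subset_span hx

lemma ehrhart_tree (ends : E → Sym2 V) (r : V) (f : E) (u : V) (hf : ends f = s(r, u))
    (hb : Build ends r Finset.univ Finset.univ) :
    ehrhartSeries (cosmoPolytope ends) * (1 - PowerSeries.X) ^ (2 * Fintype.card E + 1) =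
      (1 + 3 * PowerSeries.X) ^ Fintype.card E := by
  obtain ⟨B, hB, hser⟩ := hb.count
  rw [Finset.card_univ] at hser
  rw [← hser]
  congr 1
  ext t
  rw [ehrhartSeries, PowerSeries.coeff_mk, PowerSeries.coeff_mk]
  split_ifs with ht
  · subst ht
    have := congrArg PowerSeries.constantCoeff hser
    simp only [map_mul, map_pow, map_sub, map_add, map_one, PowerSeries.constantCoeff_X] at this
    simp only [mul_zero, sub_zero, add_zero, one_pow, mul_one] at this
    rw [← PowerSeries.coeff_zero_eq_constantCoeff_apply, PowerSeries.coeff_mk] at this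
    exact this.symm
  · rw [latticePointCount, ← Set.ncard_coe_finset]
    congr 2
    ext x
    rw [Set.mem_ofPred_eq, mem_smul_cosmo ends _ t ht, Finset.mem_coe, hB, K_univ ends r f u hf]
    refine and_congr_right fun _ => ?_
    exact_mod_cast Iff.rfl

end gen

end CosmoTree

/-- Let `T_m` be a tree with `m` edges.  Then the normalized volume of its
cosmological polytope is `Vol(C_{T_m}) = h*(C_{T_m}; 1) = 4^m`. -/
theorem normalized_volume_tree {V : Type*} [Fintype V] [DecidableEq V]
    (G : SimpleGraph V) [Fintype G.edgeSet]
    (htree : G.IsTree) (hiso : ∀ v : V, ∃ u : V, G.Adj v u)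
    (m : ℕ) (hm : m = Fintype.card G.edgeSet)
    (h : Polynomial ℚ)
    (hh : IsHStarPoly (cosmoPolytope (fun f : G.edgeSet => (f : Sym2 V)))
      (Fintype.card V + Fintype.card G.edgeSet - 1) h) :
    h.eval 1 = 4 ^ m := by
  classical
  obtain ⟨hconn, hacyc⟩ := htree
  have hcard : Fintype.card G.edgeSet + 1 = Fintype.card V := by
    have := SimpleGraph.IsTree.card_edgeFinset (G := G) ⟨hconn, hacyc⟩
    rw [← this, SimpleGraph.edgeFinset, Set.toFinset_card]
  obtain ⟨r⟩ := hconn.nonempty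
  obtain ⟨u, hu⟩ := hiso r
  have hb : CosmoTree.Build (fun f : G.edgeSet => (f : Sym2 V)) r Finset.univ Finset.univ := by
    refine CosmoTree.exists_build r ?_ hcard
    intro S hr hS
    obtain ⟨w, hw⟩ : ∃ w, w ∉ S := by
      by_contra hcon
      push Not at hcon
      exact hS (Finset.eq_univ_iff_forall.2 hcon)
    obtain ⟨p⟩ := hconn.preconnected r w
    obtain ⟨d, -, hd1, hd2⟩ := p.exists_boundary_dart (S : Set V) hr hw
    exact ⟨d.fst, hd1, d.snd, hd2, ⟨s(d.fst, d.snd), d.adj⟩, rfl⟩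
  have key := CosmoTree.ehrhart_tree (fun f : G.edgeSet => (f : Sym2 V)) r
    ⟨s(r, u), hu⟩ u rfl hb
  have hexp : Fintype.card V + Fintype.card G.edgeSet - 1 + 1 =
      2 * Fintype.card G.edgeSet + 1 := by omega
  rw [IsHStarPoly, hexp, key, ← hm] at hh
  have hpoly : h = (1 + 3 * Polynomial.X) ^ m := by
    apply Polynomial.coe_injective ℚ
    rw [← hh]
    have h3 : ((3 : Polynomial ℚ) : PowerSeries ℚ) = 3 :=
      map_ofNat (Polynomial.coeToPowerSeries.ringHom (R := ℚ)) 3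
    push_cast
    rw [h3]
  rw [hpoly]
  norm_num
end

section
/- Let G = (V,E) be a graph and let i, j ∈ V. Let G + f be the graph on vertex set V and edge multiset E ∪ {f}, where f ∉ E is a new (possibly parallel) edge between i and j. Then (1+z)·h*(C_G; z) ≼ h*(C_{G+f}; z), and equality holds if and only if f is a loop (i.e., i = j). -/
open Polynomial Pointwise

/-- The endpoint map of the graph `G + f` obtained from `G` by adding one new edge `f`
(the edge `none`) with endpoints `i` and `j`. -/
def addEdgeEnds {V E : Type*} (ends : E → Sym2 V) (i j : V) : Option E → Sym2 V :=
  fun o => Option.elim o s(i, j) ends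


set_option linter.unusedSectionVars false
set_option linter.unusedSimpArgs false

namespace Cosmo

/-- Contribution of an edge with value `a` to the cut functional. -/
def phi {R : Type*} [CommRing R] [LinearOrder R] (a : R) (p q : Prop) [Decidable p] [Decidable q] : R :=
  if p then (if q then min (2 * a) 0 else a) else (if q then a else 0)

section generic
variable {R : Type*} [CommRing R] [LinearOrder R] [IsStrictOrderedRing R]
variable {V E : Type*} [Fintype V] [Fintype E] [DecidableEq V] [DecidableEq E]

lemma phi_zero (p q : Prop) [Decidable p] [Decidable q] : phi (0 : R) p q = 0 := by
  unfold phi; split_ifs <;> simp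

lemma phi_le_abs (a : R) (p q : Prop) [Decidable p] [Decidable q] : phi a p q ≤ |a| := by
  unfold phi
  split_ifs
  · exact (min_le_right _ _).trans (abs_nonneg a)
  · exact le_abs_self a
  · exact le_abs_self a
  · exact abs_nonneg a

lemma phi_submod (a : R) (p q p' q' : Prop) [Decidable p] [Decidable q] [Decidable p']
    [Decidable q'] :
    phi a (p ∨ p') (q ∨ q') + phi a (p ∧ p') (q ∧ q') ≤ phi a p q + phi a p' q' := by
  have h1 := min_le_left (2 * a) 0
  have h2 := min_le_right (2 * a) 0
  unfold phi
  by_cases hp : p <;> by_cases hq : q <;> by_cases hp' : p' <;> by_cases hq' : q' <;>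
    simp only [hp, hq, hp', hq', or_true, true_or, or_false, and_true, and_false,
      if_true, if_false] <;> linarith

lemma phi_add (a b : R) (p q : Prop) [Decidable p] [Decidable q] :
    phi a p q + phi b p q ≤ phi (a + b) p q := by
  have h1 := min_le_left (2 * a) 0
  have h2 := min_le_right (2 * a) 0
  have h3 := min_le_left (2 * b) 0
  have h4 := min_le_right (2 * b) 0
  unfold phi
  split_ifs
  · apply le_min <;> linarith
  · exact le_rfl
  · exact le_rfl
  · simp

lemma phi_smul (c a : R) (hc : 0 ≤ c) (p q : Prop) [Decidable p] [Decidable q] :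
    phi (c * a) p q = c * phi a p q := by
  unfold phi
  split_ifs
  · rw [mul_min_of_nonneg _ _ hc]; congr 1 <;> ring
  · rfl
  · rfl
  · simp

/-- The cut functional. -/
def cutF (src tgt : E → V) (x : V ⊕ E → R) (A : Finset V) : R :=
  ∑ v ∈ A, x (Sum.inl v) + ∑ f, phi (x (Sum.inr f)) (src f ∈ A) (tgt f ∈ A)

/-- Membership in the cone, through all cut inequalities. -/
def InS (src tgt : E → V) (x : V ⊕ E → R) : Prop := ∀ A : Finset V, 0 ≤ cutF src tgt x A

lemma cutF_submod (src tgt : E → V) (x : V ⊕ E → R) (A B : Finset V) :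
    cutF src tgt x (A ∪ B) + cutF src tgt x (A ∩ B) ≤ cutF src tgt x A + cutF src tgt x B := by
  unfold cutF
  have h1 := Finset.sum_union_inter (s₁ := A) (s₂ := B) (f := fun v => x (Sum.inl v))
  have h2 : ∑ f, phi (x (Sum.inr f)) (src f ∈ A ∪ B) (tgt f ∈ A ∪ B)
      + ∑ f, phi (x (Sum.inr f)) (src f ∈ A ∩ B) (tgt f ∈ A ∩ B)
      ≤ ∑ f, phi (x (Sum.inr f)) (src f ∈ A) (tgt f ∈ A)
      + ∑ f, phi (x (Sum.inr f)) (src f ∈ B) (tgt f ∈ B) := by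
    rw [← Finset.sum_add_distrib, ← Finset.sum_add_distrib]
    refine Finset.sum_le_sum fun f _ => ?_
    have := phi_submod (x (Sum.inr f)) (src f ∈ A) (tgt f ∈ A) (src f ∈ B) (tgt f ∈ B)
    simpa only [Finset.mem_union, Finset.mem_inter] using this
  linarith

/-- indicator -/
def ind (A : Finset V) (k : V) : R := if k ∈ A then 1 else 0

/-- difference of the basis vectors of two vertices. -/
def wv (k l : V) : V ⊕ E → R := Pi.single (Sum.inl k) 1 - Pi.single (Sum.inl l) 1

lemma cutF_add_vert (src tgt : E → V) (x y : V ⊕ E → R) (hy : ∀ f, y (Sum.inr f) = 0)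
    (A : Finset V) :
    cutF src tgt (x + y) A = cutF src tgt x A + ∑ v ∈ A, y (Sum.inl v) := by
  unfold cutF
  simp only [Pi.add_apply, hy, add_zero, Finset.sum_add_distrib]
  ring

lemma sum_single_inl (A : Finset V) (k : V) :
    ∑ v ∈ A, (Pi.single (Sum.inl k) 1 : V ⊕ E → R) (Sum.inl v) = ind A k := by
  simp [Pi.single_apply, ind]

lemma cutF_wv (src tgt : E → V) (x : V ⊕ E → R) (k l : V) (s : R) (A : Finset V) :
    cutF src tgt (x + s • wv k l) A = cutF src tgt x A + s * (ind A k - ind A l) := by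
  rw [cutF_add_vert]
  · congr 1
    simp only [Pi.smul_apply, smul_eq_mul, ← Finset.mul_sum, wv, Pi.sub_apply,
      Finset.sum_sub_distrib, sum_single_inl]
  · intro f; simp [wv]

/-- Sandwich lemma. -/
lemma sandwich (F : Finset V → R) (hsub : ∀ A B, F (A ∪ B) + F (A ∩ B) ≤ F A + F B)
    (k l : V) (hkl : k ≠ l) (hun : ∀ A, (k ∈ A ↔ l ∈ A) → 0 ≤ F A) :
    ∃ A₀ : Finset V, k ∈ A₀ ∧ l ∉ A₀ ∧ (∀ A, k ∈ A → l ∉ A → F A₀ ≤ F A) ∧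
      (∀ B, k ∉ B → l ∈ B → 0 ≤ F A₀ + F B) := by
  obtain ⟨A₀, hA₀, hmin⟩ := Finset.exists_min_image
    (Finset.univ.filter fun A : Finset V => k ∈ A ∧ l ∉ A) F ⟨{k}, by simp [hkl.symm]⟩
  simp only [Finset.mem_filter, Finset.mem_univ, true_and] at hA₀ hmin
  refine ⟨A₀, hA₀.1, hA₀.2, fun A h1 h2 => hmin A ⟨h1, h2⟩, fun B h1 h2 => ?_⟩
  have e1 := hun (A₀ ∪ B) (by simp [hA₀.1, h2])
  have e2 := hun (A₀ ∩ B) (by simp [hA₀.2, h1])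
  linarith [hsub A₀ B]

lemma exists_flow (src tgt : E → V) (x : V ⊕ E → R) (k l : V) (a : R) (ha : 0 ≤ a)
    (hx : ∀ A, 0 ≤ cutF src tgt x A + phi a (k ∈ A) (l ∈ A)) :
    ∃ s, -a ≤ s ∧ s ≤ a ∧ InS src tgt (x + (-s) • wv k l) := by
  have hm : min (2 * a) 0 = 0 := min_eq_right (by linarith)
  by_cases hkl : k = l
  · subst hkl
    refine ⟨0, by linarith, ha, fun A => ?_⟩
    have := hx A
    rw [cutF_wv]
    by_cases h : k ∈ A <;> simp [phi, h, hm] at this ⊢ <;> exact this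
  · obtain ⟨A₀, h1, h2, h3, h4⟩ := sandwich (cutF src tgt x) (cutF_submod src tgt x) k l hkl
      (fun A hA => by
        have := hx A
        by_cases h : k ∈ A
        · simpa [phi, h, hA.1 h, hm] using this
        · have h' : l ∉ A := fun h' => h (hA.2 h')
          simpa [phi, h, h'] using this)
    have hA₀ := hx A₀
    simp only [phi, h1, h2, if_true, if_false] at hA₀
    refine ⟨min a (cutF src tgt x A₀), le_min (by linarith) (by linarith), min_le_left _ _,
      fun A => ?_⟩
    rw [cutF_wv]
    have hA := hx A
    have m1 := min_le_left a (cutF src tgt x A₀)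
    have m2 := min_le_right a (cutF src tgt x A₀)
    by_cases hk : k ∈ A <;> by_cases hl : l ∈ A <;>
      simp only [phi, hk, hl, if_true, if_false, ind, hm] at hA ⊢
    · linarith
    · linarith [h3 A hk hl]
    · have := h4 A hk hl
      have : - cutF src tgt x A ≤ min a (cutF src tgt x A₀) := le_min (by linarith) (by linarith)
      linarith
    · linarith

lemma flow_conv (src tgt : E → V) (x : V ⊕ E → R) (k l : V) (a s : R) (h1 : -a ≤ s) (h2 : s ≤ a)
    (h : InS src tgt (x + (-s) • wv k l)) (A : Finset V) :
    0 ≤ cutF src tgt x A + phi a (k ∈ A) (l ∈ A) := by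
  have hm : min (2 * a) 0 = 0 := min_eq_right (by linarith)
  have := h A
  rw [cutF_wv] at this
  by_cases hk : k ∈ A <;> by_cases hl : l ∈ A <;>
      simp only [phi, hk, hl, if_true, if_false, ind, hm] at this ⊢ <;> linarith

lemma InS_between (src tgt : E → V) (x : V ⊕ E → R) (k l : V) (s r s' : R) (h1 : s ≤ r)
    (h2 : r ≤ s') (h : InS src tgt (x + s • wv k l)) (h' : InS src tgt (x + s' • wv k l)) :
    InS src tgt (x + r • wv k l) := by
  intro A
  have e := h A
  have e' := h' A
  rw [cutF_wv] at *
  by_cases hk : k ∈ A <;> by_cases hl : l ∈ A <;>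
      simp only [hk, hl, if_true, if_false, ind] at * <;> linarith

lemma InS_add (src tgt : E → V) (x y : V ⊕ E → R) (hx : InS src tgt x) (hy : InS src tgt y) :
    InS src tgt (x + y) := by
  intro A
  have h1 := hx A
  have h2 := hy A
  have : cutF src tgt x A + cutF src tgt y A ≤ cutF src tgt (x + y) A := by
    unfold cutF
    have : ∑ f, phi (x (Sum.inr f)) (src f ∈ A) (tgt f ∈ A)
      + ∑ f, phi (y (Sum.inr f)) (src f ∈ A) (tgt f ∈ A)
      ≤ ∑ f, phi ((x + y) (Sum.inr f)) (src f ∈ A) (tgt f ∈ A) := by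
      rw [← Finset.sum_add_distrib]
      exact Finset.sum_le_sum fun f _ => phi_add _ _ _ _
    simp only [Pi.add_apply, Finset.sum_add_distrib] at *
    linarith
  linarith

lemma InS_smul (src tgt : E → V) (c : R) (hc : 0 ≤ c) (x : V ⊕ E → R) (hx : InS src tgt x) :
    InS src tgt (c • x) := by
  intro A
  have : cutF src tgt (c • x) A = c * cutF src tgt x A := by
    unfold cutF
    simp only [Pi.smul_apply, smul_eq_mul, phi_smul _ _ hc, ← Finset.mul_sum, mul_add]
  rw [this]
  exact mul_nonneg hc (hx A)

end generic

section real
variable {V E : Type*} [Fintype V] [Fintype E] [DecidableEq V] [DecidableEq E]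

lemma cast_phi (a : ℤ) (p q : Prop) [Decidable p] [Decidable q] :
    ((phi a p q : ℤ) : ℝ) = phi (a : ℝ) p q := by
  unfold phi; split_ifs <;> simp

lemma cast_InS (src tgt : E → V) (x : V ⊕ E → ℤ) :
    InS src tgt (fun k => (x k : ℝ)) ↔ InS src tgt x := by
  unfold InS
  refine forall_congr' fun A => ?_
  have : cutF src tgt (fun k => (x k : ℝ)) A = ((cutF src tgt x A : ℤ) : ℝ) := by
    unfold cutF
    push_cast
    simp only [cast_phi]
  rw [this]
  exact_mod_cast Iff.rfl

lemma wv_deg (k l : V) {R : Type*} [CommRing R] : ∑ o, (wv k l : V ⊕ E → R) o = 0 := by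
  simp [wv]

/-- Effect of splitting off one edge coordinate. -/
lemma cutF_split (src tgt : E → V) (x : V ⊕ E → ℝ) (f : E) (A : Finset V) :
    cutF src tgt x A = cutF src tgt (Function.update x (Sum.inr f) 0) A
      + phi (x (Sum.inr f)) (src f ∈ A) (tgt f ∈ A) := by
  unfold cutF
  rw [← Finset.add_sum_erase _ _ (Finset.mem_univ f),
    ← Finset.add_sum_erase (a := f) _ (fun g => phi (Function.update x (Sum.inr f) 0 (Sum.inr g))
      (src g ∈ A) (tgt g ∈ A)) (Finset.mem_univ f)]
  have : ∑ g ∈ Finset.univ.erase f, phi (x (Sum.inr g)) (src g ∈ A) (tgt g ∈ A) =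
    ∑ g ∈ Finset.univ.erase f, phi (Function.update x (Sum.inr f) 0 (Sum.inr g))
      (src g ∈ A) (tgt g ∈ A) := by
    refine Finset.sum_congr rfl fun g hg => ?_
    rw [Function.update_of_ne]
    simpa using Finset.ne_of_mem_erase hg
  rw [this]
  simp [phi_zero]
  ring


/-- sum of two basis vectors minus edge, etc., in `src`/`tgt` form. -/
lemma vert_mem (ends : E → Sym2 V) (src tgt : E → V) (hends : ∀ f, ends f = s(src f, tgt f))
    (x : V ⊕ E → ℝ) (hx : x ∈ cosmoVertices ends) : InS src tgt x ∧ ∑ o, x o = 1 := by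
  have base : ∀ (y : V ⊕ E → ℝ) (c : ℝ) (f : E) (A : Finset V), (∀ g, y (Sum.inr g) = 0) →
      cutF src tgt (y + Pi.single (Sum.inr f) c) A
        = ∑ v ∈ A, y (Sum.inl v) + phi c (src f ∈ A) (tgt f ∈ A) := by
    intro y c f A hy
    rw [cutF_split src tgt _ f]
    have : Function.update (y + Pi.single (Sum.inr f) c) (Sum.inr f) 0 = 0 + y := by
      ext o
      rcases o with v | g
      · simp
      · by_cases hg : g = f
        · subst hg; simp [hy]
        · simp [hy, hg]
    rw [this, cutF_add_vert _ _ _ _ hy]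
    simp [hy, cutF, phi_zero]
  obtain ⟨f, i, j, hf, h⟩ := hx
  rw [hends] at hf
  have hf' : (src f = i ∧ tgt f = j) ∨ (src f = j ∧ tgt f = i) := by simpa using hf
  have m1 : min (2 * (1:ℝ)) 0 = 0 := by norm_num
  have m2 : min (2 * (-1:ℝ)) 0 = -2 := by norm_num
  have ss : ∀ (A : Finset V) (k : V),
      ∑ v ∈ A, (Pi.single (Sum.inl k) 1 : V ⊕ E → ℝ) (Sum.inl v) = ind A k := sum_single_inl
  rcases h with rfl | rfl | rfl
  · constructor
    · intro A
      rw [sub_eq_add_neg, ← Pi.single_neg, base _ _ _ _ (by simp)]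
      simp only [Pi.add_apply, Finset.sum_add_distrib, ss]
      rcases hf' with ⟨a, b⟩ | ⟨a, b⟩ <;> rw [a, b] <;>
      by_cases h1 : i ∈ A <;> by_cases h2 : j ∈ A <;> simp only [ind, phi, h1, h2, if_true, if_false, m2] <;> norm_num
    · simp [Finset.sum_add_distrib, Finset.sum_sub_distrib]
  · constructor
    · intro A
      rw [base _ _ _ _ (by simp)]
      simp only [Pi.sub_apply, Finset.sum_sub_distrib, ss]
      rcases hf' with ⟨a, b⟩ | ⟨a, b⟩ <;> rw [a, b] <;>
      by_cases h1 : i ∈ A <;> by_cases h2 : j ∈ A <;> simp only [ind, phi, h1, h2, if_true, if_false, m1] <;> norm_num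
    · simp [Finset.sum_add_distrib, Finset.sum_sub_distrib]
  · constructor
    · intro A
      rw [base _ _ _ _ (by simp)]
      simp only [Pi.add_apply, Pi.neg_apply, Finset.sum_add_distrib, Finset.sum_neg_distrib, ss]
      rcases hf' with ⟨a, b⟩ | ⟨a, b⟩ <;> rw [a, b] <;>
      by_cases h1 : i ∈ A <;> by_cases h2 : j ∈ A <;> simp only [ind, phi, h1, h2, if_true, if_false, m1] <;> norm_num
    · simp [Finset.sum_add_distrib]

lemma poly_sub (ends : E → Sym2 V) (src tgt : E → V) (hends : ∀ f, ends f = s(src f, tgt f))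
    (x : V ⊕ E → ℝ) (hx : x ∈ cosmoPolytope ends) : InS src tgt x ∧ ∑ o, x o = 1 := by
  have : convexHull ℝ (cosmoVertices ends) ⊆ {x | InS src tgt x ∧ ∑ o, x o = 1} := by
    refine convexHull_min (fun x hx => vert_mem ends src tgt hends x hx) ?_
    rintro x ⟨hx, hx1⟩ y ⟨hy, hy1⟩ a b ha hb hab
    refine ⟨InS_add _ _ _ _ (InS_smul _ _ a ha x hx) (InS_smul _ _ b hb y hy), ?_⟩
    simp only [Pi.add_apply, Pi.smul_apply, smul_eq_mul, Finset.sum_add_distrib,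
      ← Finset.mul_sum, hx1, hy1]
    linarith
  exact this hx

/-- The cone over the polytope. -/
def Cone (ends : E → Sym2 V) : Set (V ⊕ E → ℝ) := {x | ∃ r : ℝ, 0 ≤ r ∧ x ∈ r • cosmoPolytope ends}

lemma Cone_add (ends : E → Sym2 V) {x y : V ⊕ E → ℝ} (hx : x ∈ Cone ends) (hy : y ∈ Cone ends) :
    x + y ∈ Cone ends := by
  obtain ⟨r, hr, hx⟩ := hx
  obtain ⟨s, hs, hy⟩ := hy
  refine ⟨r + s, add_nonneg hr hs, ?_⟩
  unfold cosmoPolytope at *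
  rw [(convex_convexHull ℝ (cosmoVertices ends)).add_smul hr hs]
  exact Set.add_mem_add hx hy

lemma Cone_smul (ends : E → Sym2 V) {x : V ⊕ E → ℝ} (c : ℝ) (hc : 0 ≤ c) (hx : x ∈ Cone ends) :
    c • x ∈ Cone ends := by
  obtain ⟨r, hr, hx⟩ := hx
  refine ⟨c * r, mul_nonneg hc hr, ?_⟩
  rw [mul_smul]
  exact Set.smul_mem_smul_set hx

lemma Cone_vert (ends : E → Sym2 V) {x : V ⊕ E → ℝ} (hx : x ∈ cosmoVertices ends) :
    x ∈ Cone ends := ⟨1, zero_le_one, by rw [one_smul]; exact subset_convexHull ℝ _ hx⟩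

lemma Cone_single (ends : E → Sym2 V) (hiso : ∀ v : V, ∃ f : E, v ∈ ends f) (v : V) :
    (Pi.single (Sum.inl v) 1 : V ⊕ E → ℝ) ∈ Cone ends := by
  obtain ⟨f, hf⟩ := hiso v
  obtain ⟨u, hu⟩ := Sym2.mem_iff_exists.1 hf
  have h1 := Cone_smul ends (1/2) (by norm_num)
    (Cone_vert ends (show _ ∈ cosmoVertices ends from ⟨f, v, u, hu, Or.inl rfl⟩))
  have h2 := Cone_smul ends (1/2) (by norm_num)
    (Cone_vert ends (show _ ∈ cosmoVertices ends from ⟨f, v, u, hu, Or.inr (Or.inl rfl)⟩))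
  convert Cone_add ends h1 h2 using 1
  module

lemma InS_cone (ends : E → Sym2 V) (hiso : ∀ v : V, ∃ f : E, v ∈ ends f)
    (hne : (cosmoPolytope ends).Nonempty) (src tgt : E → V)
    (hends : ∀ f, ends f = s(src f, tgt f)) (T : Finset E) :
    ∀ x : V ⊕ E → ℝ, (∀ f, f ∉ T → x (Sum.inr f) = 0) → InS src tgt x → x ∈ Cone ends := by
  induction T using Finset.induction_on with
  | empty =>
    intro x h0 hx
    have h0' : ∀ f, x (Sum.inr f) = 0 := fun f => h0 f (by simp)
    have hpos : ∀ v, 0 ≤ x (Sum.inl v) := by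
      intro v
      have := hx {v}
      simpa [cutF, h0', phi_zero] using this
    have : x = ∑ v, x (Sum.inl v) • (Pi.single (Sum.inl v) 1 : V ⊕ E → ℝ) := by
      ext o
      rcases o with v | f
      · simp [Finset.sum_apply, Pi.single_apply]
      · simp [Finset.sum_apply, h0']
    rw [this]
    refine Finset.sum_induction _ (· ∈ Cone ends) (fun _ _ => Cone_add ends) ?_
      (fun v _ => Cone_smul ends _ (hpos v) (Cone_single ends hiso v))
    obtain ⟨c, hc⟩ := hne
    exact ⟨0, le_rfl, ⟨c, hc, by simp⟩⟩
  | insert f T hf ih =>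
    intro x h0 hx
    set y := Function.update x (Sum.inr f) 0 with hy
    have hy0 : ∀ g, g ∉ T → y (Sum.inr g) = 0 := by
      intro g hg
      by_cases hgf : g = f
      · subst hgf; simp [hy]
      · rw [hy, Function.update_of_ne (by simpa using hgf)]
        exact h0 g (by simp [hg, hgf])
    have hxy : x = y + x (Sum.inr f) • (Pi.single (Sum.inr f) 1 : V ⊕ E → ℝ) := by
      ext o
      by_cases ho : o = Sum.inr f
      · subst ho; simp [hy]
      · simp [hy, ho]
    have hcut : ∀ A, 0 ≤ cutF src tgt y A + phi (x (Sum.inr f)) (src f ∈ A) (tgt f ∈ A) := by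
      intro A
      rw [hy, ← cutF_split]; exact hx A
    set a := x (Sum.inr f) with ha
    have hv := fun (z : V ⊕ E → ℝ) p => Cone_vert ends (show z ∈ cosmoVertices ends from
      ⟨f, src f, tgt f, hends f, p⟩)
    by_cases hneg : a < 0
    · have hm : min (2 * a) 0 = 2 * a := min_eq_left (by linarith)
      have h1 := ih (y + a • (Pi.single (Sum.inl (src f)) 1 + Pi.single (Sum.inl (tgt f)) 1))
        (by intro g hg; simp [hy0 g hg])
        (by
          intro A
          rw [cutF_add_vert _ _ _ _ (by simp)]
          simp only [Pi.smul_apply, Pi.add_apply, smul_eq_mul, ← Finset.mul_sum,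
            Finset.sum_add_distrib, sum_single_inl]
          have := hcut A
          by_cases h1 : src f ∈ A <;> by_cases h2 : tgt f ∈ A <;>
            simp only [ind, phi, h1, h2, if_true, if_false, hm] at this ⊢ <;> linarith)
      have h2 := Cone_add ends h1 (Cone_smul ends (-a) (by linarith) (hv _ (Or.inl rfl)))
      convert h2 using 1
      rw [hxy]
      module
    · push Not at hneg
      obtain ⟨s, hs1, hs2, hs⟩ := exists_flow src tgt y (src f) (tgt f) a hneg hcut
      have h1 := ih _ (by intro g hg; simp [hy0 g hg, wv]) hs
      have h2 := Cone_add ends (Cone_add ends h1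
        (Cone_smul ends ((a + s)/2) (by linarith) (hv _ (Or.inr (Or.inl rfl)))))
        (Cone_smul ends ((a - s)/2) (by linarith) (hv _ (Or.inr (Or.inr rfl))))
      convert h2 using 1
      rw [hxy, wv]
      module

lemma mem_dilate (ends : E → Sym2 V) (hiso : ∀ v : V, ∃ f : E, v ∈ ends f)
    (hne : (cosmoPolytope ends).Nonempty) (src tgt : E → V)
    (hends : ∀ f, ends f = s(src f, tgt f)) (t : ℝ) (ht : 0 ≤ t) (x : V ⊕ E → ℝ) :
    x ∈ t • cosmoPolytope ends ↔ InS src tgt x ∧ ∑ o, x o = t := by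
  constructor
  · rintro ⟨c, hc, rfl⟩
    obtain ⟨h1, h2⟩ := poly_sub ends src tgt hends c hc
    refine ⟨InS_smul _ _ t ht c h1, ?_⟩
    simp [← Finset.mul_sum, h2]
  · rintro ⟨h1, h2⟩
    obtain ⟨r, hr, c, hc, rfl⟩ := InS_cone ends hiso hne src tgt hends Finset.univ x (by simp) h1
    have := (poly_sub ends src tgt hends c hc).2
    simp only [Pi.smul_apply, smul_eq_mul, ← Finset.mul_sum, this, mul_one] at h2
    subst h2
    exact ⟨c, hc, rfl⟩

/-- Lattice points of degree `t` in the cone. -/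
def Sset (src tgt : E → V) (t : ℤ) : Set (V ⊕ E → ℤ) := {x | InS src tgt x ∧ ∑ o, x o = t}

lemma count_eq (ends : E → Sym2 V) (hiso : ∀ v : V, ∃ f : E, v ∈ ends f) [Nonempty E]
    (src tgt : E → V)
    (hends : ∀ f, ends f = s(src f, tgt f)) (t : ℕ) :
    latticePointCount (cosmoPolytope ends) t = (Sset src tgt t).ncard := by
  unfold latticePointCount Sset
  congr 1
  ext x
  have hne : (cosmoPolytope ends).Nonempty := by
    obtain ⟨f⟩ := ‹Nonempty E›
    exact ⟨_, subset_convexHull ℝ _ (show _ ∈ cosmoVertices ends from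
      ⟨f, src f, tgt f, hends f, Or.inl rfl⟩)⟩
  simp only [Set.mem_ofPred_eq]
  rw [mem_dilate ends hiso hne src tgt hends t (by positivity), cast_InS]
  refine and_congr_right fun _ => ?_
  exact_mod_cast Iff.rfl

lemma abs_edges (src tgt : E → V) (x : V ⊕ E → ℤ) (h : InS src tgt x) :
    ∑ f, |x (Sum.inr f)| ≤ ∑ o, x o := by
  have := h Finset.univ
  simp only [cutF, phi, Finset.mem_univ, if_true] at this
  rw [Fintype.sum_sum_type]
  have h2 : ∑ f, |x (Sum.inr f)| + ∑ f, min (2 * x (Sum.inr f)) 0 = ∑ f, x (Sum.inr f) := by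
    rw [← Finset.sum_add_distrib]
    refine Finset.sum_congr rfl fun f _ => ?_
    grind
  linarith

lemma sum_vert (src tgt : E → V) (x : V ⊕ E → ℤ) (h : InS src tgt x) (A : Finset V) :
    0 ≤ ∑ v ∈ A, x (Sum.inl v) + ∑ f, |x (Sum.inr f)| := by
  refine (h A).trans ?_
  unfold cutF
  gcongr
  exact phi_le_abs _ _ _

lemma Sset_finite (src tgt : E → V) (t : ℤ) : (Sset src tgt t).Finite := by
  refine (Set.finite_Icc (fun _ => -(3 * t)) (fun _ => 3 * t)).subset ?_
  rintro x ⟨h, ht⟩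
  have h1 := abs_edges src tgt x h
  have h0 : 0 ≤ ∑ f, |x (Sum.inr f)| := Finset.sum_nonneg fun _ _ => abs_nonneg _
  have hs : |∑ f, x (Sum.inr f)| ≤ ∑ f, |x (Sum.inr f)| := Finset.abs_sum_le_sum_abs _ _
  have key : ∀ o, |x o| ≤ 3 * t := by
    rintro (v | f)
    · have e1 := sum_vert src tgt x h {v}
      have e2 := sum_vert src tgt x h (Finset.univ.erase v)
      have e3 := Finset.add_sum_erase Finset.univ (fun v => x (Sum.inl v)) (Finset.mem_univ v)
      rw [Fintype.sum_sum_type] at ht h1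
      simp only [Finset.sum_singleton] at e1 e3
      rw [abs_le] at hs ⊢
      constructor <;> linarith
    · have := Finset.single_le_sum (f := fun f => |x (Sum.inr f)|) (fun _ _ => abs_nonneg _)
        (Finset.mem_univ f)
      beta_reduce at this
      linarith
  exact ⟨fun o => (abs_le.1 (key o)).1, fun o => (abs_le.1 (key o)).2⟩

lemma Sset_zero (src tgt : E → V) : Sset src tgt 0 = {0} := by
  ext x
  simp only [Set.mem_singleton_iff]
  constructor
  · rintro ⟨h, ht⟩
    have h1 := abs_edges src tgt x h
    have h0 : 0 ≤ ∑ f, |x (Sum.inr f)| := Finset.sum_nonneg fun _ _ => abs_nonneg _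
    have h00 : ∑ f, |x (Sum.inr f)| = 0 := by linarith
    have hE : ∀ f, x (Sum.inr f) = 0 := by
      intro f
      rw [Finset.sum_eq_zero_iff_of_nonneg (fun _ _ => abs_nonneg _)] at h00
      simpa using h00 f (Finset.mem_univ f)
    have hV : ∀ v, 0 ≤ x (Sum.inl v) := by
      intro v
      have := sum_vert src tgt x h {v}
      simpa [hE] using this
    rw [Fintype.sum_sum_type] at ht
    simp only [hE, Finset.sum_const_zero, add_zero] at ht
    rw [Finset.sum_eq_zero_iff_of_nonneg (fun v _ => hV v)] at ht
    ext o
    rcases o with v | f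
    · exact ht v (Finset.mem_univ v)
    · exact hE f
  · rintro rfl
    exact ⟨fun A => by simp [cutF, phi_zero], by simp⟩

lemma Sset_neg (src tgt : E → V) (t : ℤ) (ht : t < 0) : Sset src tgt t = ∅ := by
  ext x
  simp only [Set.mem_empty_iff_false, iff_false]
  rintro ⟨h, h'⟩
  have h1 := abs_edges src tgt x h
  have h0 : 0 ≤ ∑ f, |x (Sum.inr f)| := Finset.sum_nonneg fun _ _ => abs_nonneg _
  linarith

/-- The Hilbert series of the cone. -/
noncomputable def hilb (src tgt : E → V) : PowerSeries ℚ :=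
  PowerSeries.mk fun t => ((Sset src tgt (t : ℤ)).ncard : ℚ)

lemma ehr_eq (ends : E → Sym2 V) (hiso : ∀ v : V, ∃ f : E, v ∈ ends f) [Nonempty E]
    (src tgt : E → V)
    (hends : ∀ f, ends f = s(src f, tgt f)) :
    ehrhartSeries (cosmoPolytope ends) = hilb src tgt := by
  unfold ehrhartSeries hilb
  congr 1
  ext t
  split_ifs with h
  · subst h; simp [Sset_zero]
  · rw [count_eq ends hiso src tgt hends]

end real

section count
variable {V E : Type*} [Fintype V] [Fintype E] [DecidableEq V] [DecidableEq E]

/-- Extremal lattice points in the direction `wv k l`. -/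
def Bset (src tgt : E → V) (k l : V) (t : ℤ) : Set (V ⊕ E → ℤ) :=
  {x | (InS src tgt x ∧ ¬ InS src tgt (x + (1 : ℤ) • wv k l)) ∧ ∑ o, x o = t}

lemma ncard_translate (P : (V ⊕ E → ℤ) → Prop) (c : V ⊕ E → ℤ) :
    {y | P (y + c)}.ncard = {y | P y}.ncard := by
  rw [← Set.ncard_image_of_injective {y | P (y + c)} (add_left_injective c)]
  congr 1
  ext y
  simp only [Set.mem_image, Set.mem_ofPred_eq]
  constructor
  · rintro ⟨z, hz, rfl⟩; exact hz
  · intro h; exact ⟨y - c, by simpa using h, by simp⟩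

lemma deg_add_wv (x : V ⊕ E → ℤ) (k l : V) (s : ℤ) :
    ∑ o, (x + s • wv k l : V ⊕ E → ℤ) o = ∑ o, x o := by
  simp only [Pi.add_apply, Pi.smul_apply, smul_eq_mul, Finset.sum_add_distrib, ← Finset.mul_sum,
    wv_deg]
  simp

/-- union of translates -/
def Uset (src tgt : E → V) (k l : V) (p m : ℤ) (n : ℕ) : Set (V ⊕ E → ℤ) :=
  {y | (∃ s, m - n ≤ s ∧ s ≤ m ∧ InS src tgt (y + s • wv k l)) ∧ ∑ o, y o = p}

lemma Uset_card (src tgt : E → V) (k l : V) (p m : ℤ) (n : ℕ) :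
    (Uset src tgt k l p m n).Finite ∧ (Uset src tgt k l p m n).ncard
      = (Sset src tgt p).ncard + n * (Bset src tgt k l p).ncard := by
  have tr : ∀ s : ℤ, {y : V ⊕ E → ℤ | InS src tgt (y + s • wv k l) ∧ ∑ o, y o = p}.Finite ∧
      {y : V ⊕ E → ℤ | InS src tgt (y + s • wv k l) ∧ ∑ o, y o = p}.ncard = (Sset src tgt p).ncard := by
    intro s
    have e : {y : V ⊕ E → ℤ | InS src tgt (y + s • wv k l) ∧ ∑ o, y o = p}
      = {y | y + s • wv k l ∈ Sset src tgt p} := by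
      ext y; simp only [Sset, Set.mem_ofPred_eq, deg_add_wv]
    rw [e]
    refine ⟨?_, ncard_translate (· ∈ Sset src tgt p) _⟩
    exact (Sset_finite src tgt p).preimage (add_left_injective _).injOn
  induction n with
  | zero =>
    have : Uset src tgt k l p m 0 = {y | InS src tgt (y + m • wv k l) ∧ ∑ o, y o = p} := by
      ext y
      simp only [Uset, Set.mem_ofPred_eq]
      refine and_congr_left fun _ => ⟨?_, fun h => ⟨m, by simp, le_rfl, h⟩⟩
      rintro ⟨s, h1, h2, h3⟩
      obtain rfl : s = m := by simp at h1; omega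
      exact h3
    rw [this]
    simpa using tr m
  | succ n ih =>
    set D : Set (V ⊕ E → ℤ) := {y | y + (m - n - 1) • wv k l ∈ Bset src tgt k l p} with hD
    have hDc : D.ncard = (Bset src tgt k l p).ncard :=
      ncard_translate (· ∈ Bset src tgt k l p) _
    have hDm : ∀ y, y ∈ D ↔ (InS src tgt (y + (m - n - 1) • wv k l) ∧
        ¬ InS src tgt (y + (m - n) • wv k l)) ∧ ∑ o, y o = p := by
      intro y
      have : y + (m - n - 1) • wv k l + (1 : ℤ) • wv k l = y + (m - n) • wv k l := by module
      simp only [hD, Bset, Set.mem_ofPred_eq, deg_add_wv, this]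
    have hDf : D.Finite := (tr (m - n - 1)).1.subset fun y hy => by
      rw [hDm] at hy
      exact ⟨hy.1.1, hy.2⟩
    have hU : Uset src tgt k l p m (n + 1) = Uset src tgt k l p m n ∪ D := by
      ext y
      rw [Set.mem_union, hDm]
      simp only [Uset, Set.mem_ofPred_eq]
      push_cast
      constructor
      · rintro ⟨⟨s, h1, h2, h3⟩, h4⟩
        by_cases hs : m - n ≤ s
        · exact Or.inl ⟨⟨s, hs, h2, h3⟩, h4⟩
        · obtain rfl : s = m - n - 1 := by omega
          by_cases h5 : InS src tgt (y + (m - n) • wv k l)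
          · exact Or.inl ⟨⟨m - n, le_rfl, by omega, h5⟩, h4⟩
          · exact Or.inr ⟨⟨h3, h5⟩, h4⟩
      · rintro (⟨⟨s, h1, h2, h3⟩, h4⟩ | ⟨⟨h3, -⟩, h4⟩)
        · exact ⟨⟨s, by omega, h2, h3⟩, h4⟩
        · exact ⟨⟨m - n - 1, by omega, by omega, h3⟩, h4⟩
    have hdis : Disjoint (Uset src tgt k l p m n) D := by
      rw [Set.disjoint_left]
      rintro y ⟨⟨s, h1, h2, h3⟩, h4⟩ hy
      rw [hDm] at hy
      exact hy.1.2 (InS_between src tgt y k l (m - n - 1) (m - n) s (by omega) h1 hy.1.1 h3)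
    rw [hU]
    refine ⟨ih.1.union hDf, ?_⟩
    rw [Set.ncard_union_eq hdis ih.1 hDf, ih.2, hDc]
    ring

/-- extension by one edge coordinate -/
def mkx (a : ℤ) (y : V ⊕ E → ℤ) : V ⊕ Option E → ℤ :=
  Sum.elim (fun v => y (Sum.inl v)) (fun o => o.elim a (fun f => y (Sum.inr f)))

/-- extension of a function on edges by one new edge -/
def oe {W F : Type*} (i : W) (src : F → W) : Option F → W := fun o => o.elim i src

lemma cutF_mkx (src tgt : E → V) (i j : V) (a : ℤ) (y : V ⊕ E → ℤ) (A : Finset V) :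
    cutF (oe i src) (oe j tgt) (mkx a y) A = cutF src tgt y A + phi a (i ∈ A) (j ∈ A) := by
  unfold cutF
  rw [Fintype.sum_option]
  change _ + (phi a (i ∈ A) (j ∈ A)
    + ∑ f, phi (y (Sum.inr f)) (src f ∈ A) (tgt f ∈ A)) = _
  simp only [mkx, Sum.elim_inl]
  ring

lemma deg_mkx (a : ℤ) (y : V ⊕ E → ℤ) : ∑ o, mkx a y o = ∑ o, y o + a := by
  simp only [Fintype.sum_sum_type, Fintype.sum_option]
  simp [mkx]
  ring

lemma slice_eq (src tgt : E → V) (i j : V) (t a : ℤ) :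
    ({x | x ∈ Sset (oe i src) (oe j tgt) t ∧ x (Sum.inr none) = a}).ncard =
    ({y : V ⊕ E → ℤ | (∀ A, 0 ≤ cutF src tgt y A + phi a (i ∈ A) (j ∈ A)) ∧
      ∑ o, y o = t - a}).ncard := by
  have hinj : Function.Injective (mkx a : (V ⊕ E → ℤ) → _) := by
    intro y z h
    ext o
    rcases o with v | f
    · exact congrFun h (Sum.inl v)
    · exact congrFun h (Sum.inr (some f))
  rw [← Set.ncard_image_of_injective _ hinj]
  congr 1
  ext x
  simp only [Set.mem_image, Set.mem_ofPred_eq, Sset]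
  constructor
  · rintro ⟨⟨h1, h2⟩, h3⟩
    have hx : mkx a (fun o => x (Sum.map id some o)) = x := by
      ext o
      rcases o with v | _ | f
      · rfl
      · exact h3.symm
      · rfl
    refine ⟨fun o => x (Sum.map id some o), ⟨fun A => ?_, ?_⟩, hx⟩
    · rw [← cutF_mkx, hx]; exact h1 A
    · rw [← hx, deg_mkx] at h2; linarith
  · rintro ⟨y, ⟨h1, h2⟩, rfl⟩
    refine ⟨⟨fun A => ?_, ?_⟩, rfl⟩
    · rw [cutF_mkx]; exact h1 A
    · rw [deg_mkx, h2]; ring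

lemma slice_pos (src tgt : E → V) (i j : V) (t : ℤ) (a : ℕ) :
    ({x | x ∈ Sset (oe i src) (oe j tgt) t ∧ x (Sum.inr none) = (a : ℤ)}).ncard =
    (Sset src tgt (t - a)).ncard + 2 * a * (Bset src tgt i j (t - a)).ncard := by
  rw [slice_eq]
  have := (Uset_card src tgt i j (t - a) a (2 * a)).2
  rw [← this]
  congr 1
  ext y
  simp only [Uset, Set.mem_ofPred_eq]
  refine and_congr_left fun _ => ⟨fun h => ?_, ?_⟩
  · obtain ⟨s, h1, h2, h3⟩ := exists_flow src tgt y i j a (by omega) h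
    exact ⟨-s, by push_cast; omega, by omega, h3⟩
  · rintro ⟨s, h1, h2, h3⟩ A
    refine flow_conv src tgt y i j a (-s) (by omega) (by push_cast at h1; omega) ?_ A
    simpa using h3

lemma slice_neg (src tgt : E → V) (i j : V) (t : ℤ) (a : ℕ) :
    ({x | x ∈ Sset (oe i src) (oe j tgt) t ∧ x (Sum.inr none) = -(a : ℤ)}).ncard =
    (Sset src tgt (t - a)).ncard := by
  rw [slice_eq]
  have := ncard_translate (· ∈ Sset src tgt (t - a))
    ((-(a : ℤ)) • (Pi.single (Sum.inl i) 1 + Pi.single (Sum.inl j) 1))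
  refine Eq.trans ?_ this
  congr 1
  ext y
  simp only [Sset, Set.mem_ofPred_eq, InS]
  have hm : min (2 * (-(a : ℤ))) 0 = 2 * (-(a : ℤ)) := min_eq_left (by omega)
  refine and_congr (forall_congr' fun A => ?_) ?_
  · rw [cutF_add_vert _ _ _ _ (by simp)]
    simp only [Pi.smul_apply, Pi.add_apply, smul_eq_mul, ← Finset.mul_sum,
            Finset.sum_add_distrib, sum_single_inl]
    by_cases h1 : i ∈ A <;> by_cases h2 : j ∈ A <;>
            simp only [ind, phi, h1, h2, if_true, if_false, hm] <;> ring_nf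
  · have : ∑ o, (y + (-(a : ℤ)) • (Pi.single (Sum.inl i) 1 + Pi.single (Sum.inl j) 1) : V ⊕ E → ℤ) o
        = ∑ o, y o - 2 * a := by
      simp [Finset.sum_add_distrib, ← Finset.mul_sum]; ring
    rw [this]
    constructor <;> intro h <;> linarith

lemma card_rec (src tgt : E → V) (i j : V) (t : ℕ) :
    (Sset (oe i src) (oe j tgt) t).ncard = ∑ p ∈ Finset.HasAntidiagonal.antidiagonal t,
      ((Sset src tgt p.1).ncard * (if p.2 = 0 then 1 else 2)
        + (Bset src tgt i j p.1).ncard * (2 * p.2)) := by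
  classical
  have hfin := Sset_finite (oe i src) (oe j tgt) t
  rw [Set.ncard_eq_toFinset_card _ hfin]
  rw [Finset.card_eq_sum_card_fiberwise (t := Finset.HasAntidiagonal.antidiagonal t)
    (f := fun x : V ⊕ Option E → ℤ => (t - (x (Sum.inr none)).natAbs, (x (Sum.inr none)).natAbs))]
  · refine Finset.sum_congr rfl fun p hp => ?_
    obtain ⟨p, a⟩ := p
    rw [Finset.HasAntidiagonal.mem_antidiagonal] at hp
    simp only at hp
    have hpt : (t : ℤ) - a = p := by omega
    rw [← Set.ncard_coe_finset]
    have e : ((hfin.toFinset.filter fun x : V ⊕ Option E → ℤ =>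
        (t - (x (Sum.inr none)).natAbs, (x (Sum.inr none)).natAbs) = (p, a) : Finset _) : Set _)
        = {x | x ∈ Sset (oe i src) (oe j tgt) t ∧ x (Sum.inr none) = (a : ℤ)} ∪
          {x | x ∈ Sset (oe i src) (oe j tgt) t ∧ x (Sum.inr none) = -(a : ℤ)} := by
      ext x
      simp only [Finset.coe_filter, Set.Finite.mem_toFinset, Set.mem_union, Set.mem_ofPred_eq,
        Prod.mk.injEq]
      rw [← and_or_left]
      refine and_congr_right fun _ => ?_
      omega
    rw [e]
    have s1 := slice_pos src tgt i j t a
    have s2 := slice_neg src tgt i j t a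
    rw [hpt] at s1 s2
    by_cases ha : a = 0
    · subst ha
      simp only [Nat.cast_zero, neg_zero, Set.union_self] at s1 ⊢
      rw [s1]; simp
    · rw [Set.ncard_union_eq _ (hfin.subset fun x hx => hx.1) (hfin.subset fun x hx => hx.1),
        s1, s2, if_neg ha]
      · ring
      · rw [Set.disjoint_left]
        rintro x ⟨-, h1⟩ ⟨-, h2⟩
        omega
  · intro x hx
    simp only [Set.Finite.coe_toFinset] at hx
    have h1 := abs_edges _ _ x hx.1
    rw [hx.2] at h1
    have := Finset.single_le_sum (f := fun f => |x (Sum.inr f)|) (fun _ _ => abs_nonneg _)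
        (Finset.mem_univ none)
    beta_reduce at this
    have : |x (Sum.inr none)| ≤ t := this.trans h1
    rw [abs_le] at this
    simp only [Finset.mem_coe, Finset.HasAntidiagonal.mem_antidiagonal]
    omega

/-- The Hilbert series of extremal points. -/
noncomputable def hilbB (src tgt : E → V) (k l : V) : PowerSeries ℚ :=
  PowerSeries.mk fun t => ((Bset src tgt k l (t : ℤ)).ncard : ℚ)

lemma hilb_rec (src tgt : E → V) (i j : V) :
    hilb (oe i src) (oe j tgt) * (1 - PowerSeries.X) ^ 2 =
      hilb src tgt * (1 + PowerSeries.X) * (1 - PowerSeries.X)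
        + 2 * PowerSeries.X * hilbB src tgt i j := by
  set A1 : PowerSeries ℚ := PowerSeries.mk fun a => if a = 0 then 1 else 2 with hA1
  set A2 : PowerSeries ℚ := PowerSeries.mk fun a => 2 * (a : ℚ) with hA2
  have h1 : A1 * (1 - PowerSeries.X) = 1 + PowerSeries.X := by
    ext n
    rcases n with _ | _ | n
    · simp [hA1, mul_sub]
    · simp [hA1, mul_sub, PowerSeries.coeff_succ_mul_X, PowerSeries.coeff_one]; norm_num
    · simp [hA1, mul_sub, PowerSeries.coeff_succ_mul_X, PowerSeries.coeff_one, PowerSeries.coeff_X]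
  have h2 : A2 * (1 - PowerSeries.X) = A1 - 1 := by
    ext n
    rcases n with _ | n
    · simp [hA1, hA2, mul_sub]
    · simp [hA1, hA2, mul_sub, PowerSeries.coeff_succ_mul_X, PowerSeries.coeff_one]; ring
  have h3 : hilb (oe i src) (oe j tgt) = hilb src tgt * A1 + hilbB src tgt i j * A2 := by
    ext n
    simp only [map_add, PowerSeries.coeff_mul, hilb, hilbB, PowerSeries.coeff_mk, hA1, hA2]
    rw [card_rec, ← Finset.sum_add_distrib]
    push_cast
    rfl
  rw [h3]
  linear_combination (hilb src tgt * (1 - PowerSeries.X) + hilbB src tgt i j) * h1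
    + hilbB src tgt i j * (1 - PowerSeries.X) * h2

lemma Bset_loop (src tgt : E → V) (i : V) (t : ℤ) : Bset src tgt i i t = ∅ := by
  ext x
  simp [Bset, wv]

lemma hilbB_loop (src tgt : E → V) (i : V) : hilbB src tgt i i = 0 := by
  ext n
  simp [hilbB, Bset_loop]

lemma Bset_zero (src tgt : E → V) (i j : V) (hij : i ≠ j) : (Bset src tgt i j 0).ncard = 1 := by
  have : Bset src tgt i j 0 = {0} := by
    ext x
    constructor
    · rintro ⟨⟨h1, -⟩, h2⟩
      rw [← Sset_zero src tgt]
      exact ⟨h1, h2⟩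
    · intro h
      obtain rfl : x = 0 := h
      have h0 : (0 : V ⊕ E → ℤ) ∈ Sset src tgt 0 := by rw [Sset_zero]; rfl
      refine ⟨⟨h0.1, fun h => ?_⟩, h0.2⟩
      have := h {j}
      rw [cutF_wv] at this
      simp [ind, hij, cutF, phi_zero] at this
  rw [this, Set.ncard_singleton]

/-! ### The quotient graph -/

/-- the quotient map -/
def rmap (k l : V) (hkl : k ≠ l) (v : V) : {v : V // v ≠ l} :=
  if h : v = l then ⟨k, hkl⟩ else ⟨v, h⟩

/-- projection of points to the quotient -/
def proj (k l : V) (x : V ⊕ E → ℤ) : {v : V // v ≠ l} ⊕ E → ℤ :=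
  Sum.elim (fun v => x (Sum.inl v.1) + if v.1 = k then x (Sum.inl l) else 0)
    (fun f => x (Sum.inr f))

lemma sum_proj (k l : V) (hkl : k ≠ l) (x : V ⊕ E → ℤ) (A : Finset {v : V // v ≠ l}) :
    ∑ v ∈ A, proj k l x (Sum.inl v)
      = ∑ v ∈ Finset.univ.filter (fun v => rmap k l hkl v ∈ A), x (Sum.inl v) := by
  rw [Finset.sum_filter, Fintype.sum_eq_add_sum_subtype_ne _ l]
  have h1 : rmap k l hkl l = ⟨k, hkl⟩ := by simp [rmap]
  have h2 : ∀ v : {v : V // v ≠ l}, rmap k l hkl v.1 = v := by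
    intro v; simp [rmap, v.2]
  simp only [h1, h2, proj, Sum.elim_inl, Finset.sum_add_distrib]
  rw [Finset.sum_ite_mem, Finset.univ_inter, add_comm]
  congr 1
  have : ∀ v : {v : V // v ≠ l}, (v.1 = k) ↔ (v = ⟨k, hkl⟩) := by
    intro v; rw [Subtype.ext_iff]
  simp only [this, Finset.sum_ite_eq']

lemma cutF_proj (src tgt : E → V) (k l : V) (hkl : k ≠ l) (x : V ⊕ E → ℤ)
    (A : Finset {v : V // v ≠ l}) :
    cutF (rmap k l hkl ∘ src) (rmap k l hkl ∘ tgt) (proj k l x) A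
      = cutF src tgt x (Finset.univ.filter (fun v => rmap k l hkl v ∈ A)) := by
  unfold cutF
  rw [sum_proj k l hkl]
  simp [proj]

lemma deg_proj (k l : V) (hkl : k ≠ l) (x : V ⊕ E → ℤ) : ∑ o, proj k l x o = ∑ o, x o := by
  rw [Fintype.sum_sum_type, Fintype.sum_sum_type, sum_proj k l hkl]
  simp [proj]

lemma Bset_card (src tgt : E → V) (k l : V) (hkl : k ≠ l) (t : ℤ) :
    (Bset src tgt k l t).ncard
      = (Sset (rmap k l hkl ∘ src) (rmap k l hkl ∘ tgt) t).ncard := by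
  refine Set.ncard_congr (fun x _ => proj k l x) ?_ ?_ ?_
  · rintro x ⟨⟨h1, -⟩, h2⟩
    exact ⟨fun A => by rw [cutF_proj]; exact h1 _, by rw [deg_proj k l hkl, h2]⟩
  · rintro x y ⟨⟨hx, hx'⟩, -⟩ ⟨⟨hy, hy'⟩, -⟩ hxy
    have hE : ∀ f, x (Sum.inr f) = y (Sum.inr f) := fun f => congrFun hxy (Sum.inr f)
    have hV : ∀ v, v ≠ l → v ≠ k → x (Sum.inl v) = y (Sum.inl v) := by
      intro v h1 h2
      simpa [proj, h2] using congrFun hxy (Sum.inl ⟨v, h1⟩)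
    have hk : x (Sum.inl k) + x (Sum.inl l) = y (Sum.inl k) + y (Sum.inl l) := by
      simpa [proj] using congrFun hxy (Sum.inl ⟨k, hkl⟩)
    have key : y = x + (y (Sum.inl k) - x (Sum.inl k)) • wv k l := by
      ext o
      rcases o with v | f
      · by_cases h1 : v = k
        · subst h1; simp [wv, hkl]
        · by_cases h2 : v = l
          · subst h2; simp [wv, h1]; linarith
          · simp [wv, h1, h2, hV v h2 h1]
      · simp [wv, hE]
    set m := y (Sum.inl k) - x (Sum.inl k) with hm
    have hx0 : InS src tgt (x + (0 : ℤ) • wv k l) := by simpa using hx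
    have hy0 : InS src tgt (y + (0 : ℤ) • wv k l) := by simpa using hy
    rcases lt_trichotomy m 0 with h | h | h
    · exfalso
      refine hy' (InS_between src tgt y k l 0 1 (-m) (by omega) (by omega) hy0 ?_)
      rw [key]
      have : x + m • wv k l + -m • wv k l = x := by module
      rw [this]; exact hx
    · rw [key, h]; simp
    · exfalso
      refine hx' (InS_between src tgt x k l 0 1 m (by omega) (by omega) hx0 ?_)
      rw [← key]; exact hy
  · rintro z ⟨hz, hz2⟩
    set y : V ⊕ E → ℤ := Sum.elim (fun v => if h : v = l then 0 else z (Sum.inl ⟨v, h⟩))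
      (fun f => z (Sum.inr f)) with hy
    have pw : ∀ s : ℤ, proj k l (y + s • wv k l) = z := by
      intro s
      ext o
      rcases o with ⟨v, hv⟩ | f
      · by_cases h1 : v = k
        · subst h1; simp [proj, hy, wv, hv]
        · simp [proj, hy, wv, hv, h1]
      · simp [proj, hy, wv]
    have hun : ∀ A : Finset V, (k ∈ A ↔ l ∈ A) → 0 ≤ cutF src tgt y A := by
      intro A hA
      have := hz (Finset.univ.filter fun v => v.1 ∈ A)
      rw [← pw 0, cutF_proj] at this
      have e1 : y + (0 : ℤ) • wv k l = y := by simp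
      have e2 : (Finset.univ.filter fun v => rmap k l hkl v ∈
          (Finset.univ.filter fun v : {v : V // v ≠ l} => v.1 ∈ A)) = A := by
        ext v
        by_cases h : v = l
        · subst h; simp [rmap, hA]
        · simp [rmap, h]
      rwa [e1, e2] at this
    obtain ⟨A₀, h1, h2, h3, h4⟩ := sandwich (cutF src tgt y) (cutF_submod src tgt y) l k hkl.symm
      (fun A hA => hun A hA.symm)
    refine ⟨y + (cutF src tgt y A₀) • wv k l, ⟨⟨fun A => ?_, fun h => ?_⟩, ?_⟩, pw _⟩
    · rw [cutF_wv]
      by_cases hk : k ∈ A <;> by_cases hl : l ∈ A <;>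
        simp only [ind, hk, hl, if_true, if_false]
      · linarith [hun A (by simp [hk, hl])]
      · linarith [h4 A hl hk]
      · linarith [h3 A hl hk]
      · linarith [hun A (by simp [hk, hl])]
    · have := h A₀
      rw [cutF_wv, cutF_wv] at this
      simp only [ind, h1, h2, if_true, if_false] at this
      linarith
    · rw [← deg_proj k l hkl, pw, hz2]

end count

section nonneg

lemma hilb_equiv {V E F : Type*} [Fintype V] [Fintype E] [Fintype F] [DecidableEq V]
    [DecidableEq E] [DecidableEq F] (e : E ≃ F) (src tgt : F → V) :
    hilb src tgt = hilb (src ∘ e) (tgt ∘ e) := by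
  unfold hilb
  congr 1
  ext t
  congr 1
  refine Set.ncard_congr (fun x _ => x ∘ Sum.map id e) ?_ ?_ ?_
  · rintro x ⟨h1, h2⟩
    refine ⟨fun A => ?_, ?_⟩
    · have := h1 A
      unfold cutF at this ⊢
      rw [← Equiv.sum_comp e] at this
      exact this
    · rw [← h2, Fintype.sum_sum_type, Fintype.sum_sum_type,
        ← Equiv.sum_comp e (fun f => x (Sum.inr f))]
      rfl
  · intro x y _ _ h
    ext o
    rcases o with v | f
    · exact congrFun h (Sum.inl v)
    · simpa using congrFun h (Sum.inr (e.symm f))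
  · rintro z ⟨h1, h2⟩
    have hz : (z ∘ Sum.map id e.symm) ∘ Sum.map id e = z := by
      ext o
      rcases o with v | f <;> simp
    refine ⟨z ∘ Sum.map id e.symm, ⟨fun A => ?_, ?_⟩, hz⟩
    · have := h1 A
      unfold cutF at this ⊢
      rw [← Equiv.sum_comp e]
      simpa using this
    · rw [← h2, Fintype.sum_sum_type, Fintype.sum_sum_type,
        ← Equiv.sum_comp e]
      simp

lemma hilb_empty {V E : Type*} [Fintype V] [Fintype E] [DecidableEq V]
    [DecidableEq E] [IsEmpty E] (src tgt : E → V) :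
    hilb src tgt * (1 - PowerSeries.X) ^ (Fintype.card V) = 1 := by
  have h : hilb src tgt = (PowerSeries.mk 1) ^ (Fintype.card V) := by
    rw [← Finset.card_univ, ← Finset.prod_const]
    ext t
    rw [PowerSeries.coeff_prod]
    simp only [hilb, PowerSeries.coeff_mk, Pi.one_apply, Finset.prod_const_one, Finset.sum_const,
      nsmul_eq_mul, mul_one]
    congr 1
    rw [← Set.ncard_coe_finset]
    symm
    refine Set.ncard_congr
      (fun g _ => Sum.elim (fun v => ((g v : ℕ) : ℤ)) (fun f => isEmptyElim f)) ?_ ?_ ?_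
    · intro g hg
      simp only [Finset.mem_coe, Finset.mem_finsuppAntidiag] at hg
      refine ⟨fun A => ?_, ?_⟩
      · simp only [cutF, Sum.elim_inl, Finset.univ_eq_empty, Finset.sum_empty, add_zero]
        positivity
      · simp only [Fintype.sum_sum_type, Sum.elim_inl, Finset.univ_eq_empty, Finset.sum_empty,
          add_zero]
        exact_mod_cast hg.1
    · intro g g' _ _ h
      ext v
      have := congrFun h (Sum.inl v)
      simpa using this
    · rintro x ⟨h1, h2⟩
      have hpos : ∀ v, 0 ≤ x (Sum.inl v) := by
        intro v
        have := h1 {v}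
        simpa [cutF] using this
      refine ⟨Finsupp.equivFunOnFinite.symm fun v => (x (Sum.inl v)).toNat, ?_, ?_⟩
      · simp only [Finset.mem_coe, Finset.mem_finsuppAntidiag]
        refine ⟨?_, Finset.subset_univ _⟩
        rw [Fintype.sum_sum_type] at h2
        simp only [Finset.univ_eq_empty, Finset.sum_empty, add_zero] at h2
        zify
        rw [← h2]
        exact Finset.sum_congr rfl fun v _ => by simp [hpos v]
      · ext o
        rcases o with v | f
        · simp [hpos v]
        · exact isEmptyElim f
  rw [h, ← mul_pow, PowerSeries.mk_one_mul_one_sub_eq_one, one_pow]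

lemma step_eq {V E : Type*} [Fintype V] [Fintype E] [DecidableEq V]
    [DecidableEq E] (src tgt : E → V) (i j : V) :
    hilb (oe i src) (oe j tgt) * (1 - PowerSeries.X) ^ (Fintype.card V + Fintype.card E + 1) =
      (1 + PowerSeries.X) * (hilb src tgt * (1 - PowerSeries.X) ^ (Fintype.card V + Fintype.card E))
      + 2 * PowerSeries.X * (hilbB src tgt i j
        * (1 - PowerSeries.X) ^ (Fintype.card V - 1 + Fintype.card E)) := by
  obtain ⟨m, hm⟩ : ∃ m, Fintype.card V = m + 1 :=
    Nat.exists_eq_succ_of_ne_zero (Fintype.card_pos_iff.2 ⟨i⟩).ne'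
  rw [hm, Nat.add_sub_cancel]
  have := hilb_rec src tgt i j
  linear_combination (1 - PowerSeries.X) ^ (m + Fintype.card E) * this

lemma hilbB_eq {V E : Type*} [Fintype V] [Fintype E] [DecidableEq V]
    [DecidableEq E] (src tgt : E → V) (i j : V) (hij : i ≠ j) :
    hilbB src tgt i j = hilb (rmap i j hij ∘ src) (rmap i j hij ∘ tgt) := by
  ext t
  simp [hilb, hilbB, Bset_card src tgt i j hij]

/-- coefficientwise nonnegativity -/
def NN (p : PowerSeries ℚ) : Prop := ∀ n, 0 ≤ PowerSeries.coeff n p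

lemma NN_add {p q : PowerSeries ℚ} (hp : NN p) (hq : NN q) : NN (p + q) := fun n => by
  rw [map_add]; exact add_nonneg (hp n) (hq n)

lemma NN_X {p : PowerSeries ℚ} (hp : NN p) : NN (PowerSeries.X * p) := fun n => by
  rcases n with _ | n
  · simp
  · rw [PowerSeries.coeff_succ_X_mul]; exact hp n

lemma stepB_nonneg {V E : Type*} [Fintype V] [Fintype E] [DecidableEq V]
    [DecidableEq E] (src tgt : E → V) (i j : V)
    (h : ∀ hij : i ≠ j, NN (hilb (rmap i j hij ∘ src) (rmap i j hij ∘ tgt)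
      * (1 - PowerSeries.X) ^ (Fintype.card {v : V // v ≠ j} + Fintype.card E))) :
    NN (2 * PowerSeries.X * (hilbB src tgt i j
        * (1 - PowerSeries.X) ^ (Fintype.card V - 1 + Fintype.card E))) := by
  by_cases hij : i = j
  · subst hij
    rw [hilbB_loop]
    intro n; simp
  · have := h hij
    rw [← hilbB_eq, show Fintype.card {v : V // v ≠ j} = Fintype.card V - 1 by simp] at this
    rw [two_mul, add_mul]
    exact NN_add (NN_X this) (NN_X this)

universe u v

lemma hilb_nonneg (E : Type v) [Finite E] : ∀ [Fintype E] [DecidableEq E] (V : Type u) [Fintype V]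
    [DecidableEq V] (src tgt : E → V),
    NN (hilb src tgt * (1 - PowerSeries.X) ^ (Fintype.card V + Fintype.card E)) := by
  induction E using Finite.induction_empty_option with
  | @of_equiv α β e ih =>
    intro _ _ V _ _ src tgt
    have : Fintype α := Fintype.ofEquiv _ e.symm
    have : DecidableEq α := Classical.decEq α
    rw [hilb_equiv e, ← Fintype.card_congr e]
    exact ih V _ _
  | h_empty =>
    intro _ _ V _ _ src tgt
    rw [Fintype.card_eq_zero (α := PEmpty), add_zero, hilb_empty]
    intro n
    rw [PowerSeries.coeff_one]
    split_ifs <;> norm_num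
  | h_option ih =>
    rename_i E _
    intro i1 i2 V _ _ src tgt
    classical
    obtain rfl : i1 = instFintypeOption := Subsingleton.elim _ _
    obtain rfl : i2 = Option.instDecidableEq := Subsingleton.elim _ _
    have e1 : src = oe (src none) (src ∘ some) := by funext o; cases o <;> rfl
    have e2 : tgt = oe (tgt none) (tgt ∘ some) := by funext o; cases o <;> rfl
    rw [e1, e2, Fintype.card_option, ← add_assoc, step_eq]
    refine NN_add ?_ (stepB_nonneg _ _ _ _ fun hij => ih _ _ _)
    rw [add_mul, one_mul]
    exact NN_add (ih V _ _) (NN_X (ih V _ _))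

end nonneg
end Cosmo

/-- Let `G = (V,E)` be a graph, `i, j ∈ V`, and let `G + f` be obtained from
`G` by adding a new edge `f` between `i` and `j`.  Then
`(1+z)·h*(C_G; z) ≼ h*(C_{G+f}; z)` coefficientwise, with equality if and only if `f` is a
loop (i.e. `i = j`). -/
theorem hstar_add_edge
    {V E : Type*} [Fintype V] [Fintype E] [DecidableEq V] [DecidableEq E]
    (ends : E → Sym2 V) (hiso : ∀ v : V, ∃ f : E, v ∈ ends f) (i j : V)
    (h h' : Polynomial ℚ)
    (hh : IsHStarPoly (cosmoPolytope ends) (Fintype.card V + Fintype.card E - 1) h)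
    (hh' : IsHStarPoly (cosmoPolytope (addEdgeEnds ends i j))
      (Fintype.card V + Fintype.card (Option E) - 1) h') :
    (∀ n : ℕ, ((1 + Polynomial.X) * h).coeff n ≤ h'.coeff n) ∧
      ((1 + Polynomial.X) * h = h' ↔ i = j) := by
  obtain ⟨src, hsrc⟩ : ∃ src : E → V, ∀ f, ∃ w, ends f = s(src f, w) :=
    ⟨fun f => (ends f).out.1, fun f => ⟨(ends f).out.2, (Quot.out_eq (ends f)).symm⟩⟩
  choose tgt hends using hsrc
  have hE : Nonempty E := ⟨(hiso i).choose⟩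
  have hV : 0 < Fintype.card V := Fintype.card_pos_iff.2 ⟨i⟩
  have hends' : ∀ o, addEdgeEnds ends i j o = s(Cosmo.oe i src o, Cosmo.oe j tgt o) := by
    rintro (_ | f)
    · rfl
    · exact hends f
  have hiso' : ∀ v : V, ∃ o, v ∈ addEdgeEnds ends i j o := fun v => by
    obtain ⟨f, hf⟩ := hiso v
    exact ⟨some f, hf⟩
  unfold IsHStarPoly at hh hh'
  rw [Cosmo.ehr_eq ends hiso src tgt hends,
    show Fintype.card V + Fintype.card E - 1 + 1 = Fintype.card V + Fintype.card E by omega] at hh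
  rw [Cosmo.ehr_eq _ hiso' _ _ hends', Fintype.card_option,
    show Fintype.card V + (Fintype.card E + 1) - 1 + 1
      = Fintype.card V + Fintype.card E + 1 by omega, Cosmo.step_eq, hh] at hh'
  set D := 2 * PowerSeries.X * (Cosmo.hilbB src tgt i j
        * (1 - PowerSeries.X) ^ (Fintype.card V - 1 + Fintype.card E)) with hD
  have hDn : Cosmo.NN D :=
    Cosmo.stepB_nonneg src tgt i j fun hij => Cosmo.hilb_nonneg E _ _ _
  have hcast : (((1 + Polynomial.X) * h : Polynomial ℚ) : PowerSeries ℚ)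
      = (1 + PowerSeries.X) * (h : PowerSeries ℚ) := by simp
  rw [← hcast] at hh'
  refine ⟨fun n => ?_, fun heq => ?_, fun hij => ?_⟩
  · have := congrArg (PowerSeries.coeff n) hh'
    rw [map_add, Polynomial.coeff_coe, Polynomial.coeff_coe] at this
    linarith [hDn n]
  · by_contra hij
    rw [heq] at hh'
    have hD0 : D = 0 := by simpa using hh'
    have := congrArg (PowerSeries.coeff 1) hD0
    rw [hD, mul_comm (2 : PowerSeries ℚ), mul_assoc, PowerSeries.coeff_succ_X_mul,
      PowerSeries.coeff_zero_eq_constantCoeff_apply] at this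
    have hc : PowerSeries.constantCoeff (Cosmo.hilbB src tgt i j) = 1 := by
      rw [← PowerSeries.coeff_zero_eq_constantCoeff_apply]
      simp [Cosmo.hilbB, Cosmo.Bset_zero src tgt i j hij]
    have h2 : PowerSeries.constantCoeff (2 : PowerSeries ℚ) = 2 := map_ofNat _ 2
    simp [hc, h2] at this
  · subst hij
    have hD0 : D = 0 := by rw [hD, Cosmo.hilbB_loop]; simp
    rw [hD0, add_zero] at hh'
    exact_mod_cast hh'
end
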